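/- Let A be a standard graded polynomial ring over an infinite field and I a homogeneous almost complete intersection ideal generated by a d-sequence f_1, ..., f_n of degrees d_1 ≤ ... ≤ d_n with f_1, ..., f_{n-1} regular and reg(A/I) < (∑_{l=1}^{n-1} d_l) − n + 1. Then for s ≫ 0 the regularity of powers satisfies reg(A/I^s) = d_n·s + ((∑_{l=1}^{n} d_l) − n − 2d_n); in particular reg(I^s) is a linear function of s with leading coefficient d_n for all s ≥ 2. -/

import Mathlib

open Ideal

/-- A sequence `f 0, …, f (n-1)` is a *d-sequence* in `A` if
`(⟨f_0,…,f_{i-1}⟩ : f_i) ∩ ⟨f_0,…,f_{n-1}⟩ = ⟨f_0,…,f_{i-1}⟩` for every `i`. -/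
def IsDSequence {A : Type*} [CommRing A] {n : ℕ} (f : Fin n → A) : Prop :=
  ∀ i : Fin n,
    (Ideal.span (f '' {j | j < i})).colon (Ideal.span {f i}) ⊓ Ideal.span (Set.range f)
      = Ideal.span (f '' {j | j < i})

/-- A (proper) regular sequence: each `f i` is a nonzerodivisor modulo the previous ones,
and the sequence generates a proper ideal. -/
def IsRegSeq {A : Type*} [CommRing A] {n : ℕ} (f : Fin n → A) : Prop :=
  (∀ i : Fin n, ∀ a : A, a * f i ∈ Ideal.span (f '' {j | j < i}) →
      a ∈ Ideal.span (f '' {j | j < i}))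
  ∧ Ideal.span (Set.range f) ≠ ⊤

/-- Extension of an `ℕ`-graded family of submodules to `ℤ` (zero in negative degrees). -/
def zg {K A : Type*} [Semiring K] [AddCommMonoid A] [Module K A]
    (𝒜 : ℕ → Submodule K A) : ℤ → Submodule K A :=
  fun z => if 0 ≤ z then 𝒜 z.toNat else ⊥

/-- The irrelevant (graded maximal) ideal of a graded algebra. -/
def irrel {K A : Type*} [CommRing K] [CommRing A] [Algebra K A]
    (𝒜 : ℕ → Submodule K A) : Ideal A :=
  Ideal.span (⋃ n : ℕ, ((𝒜 (n + 1) : Submodule K A) : Set A))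

/-- `𝒜` is a standard grading: `𝒜 0 = K·1`, the grading is generated in degree one,
and the degree-one part is finitely generated. -/
def IsStdGraded {K A : Type*} [CommSemiring K] [Semiring A] [Algebra K A]
    (𝒜 : ℕ → Submodule K A) : Prop :=
  𝒜 0 = 1 ∧ (∀ n : ℕ, 𝒜 (n + 1) = 𝒜 1 * 𝒜 n) ∧ (𝒜 1).FG

/-- A minimal graded free resolution of the graded module `M` (graded pieces `ℳ`) over the
`γ`-graded ring `A` (graded pieces `𝒜`, graded maximal ideal `𝔪`):
free modules `ι i →₀ A` with generator degrees `σ i`, differentials `d`, augmentation `ε`,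
which is exact, with graded differentials and augmentation, and minimal
(all differentials land in `𝔪 • F`). -/
structure MinGradedFreeRes (K : Type) [Field K] (A : Type) [CommRing A] [Algebra K A]
    {γ : Type} [AddCommGroup γ] (𝒜 : γ → Submodule K A) (𝔪 : Ideal A)
    (M : Type) [AddCommGroup M] [Module A M] [Module K M]
    (ℳ : γ → Submodule K M) where
  ι : ℕ → Type
  fin : ∀ i, Finite (ι i)
  σ : ∀ i, ι i → γ
  d : ∀ i, (ι (i + 1) →₀ A) →ₗ[A] (ι i →₀ A)
  ε : (ι 0 →₀ A) →ₗ[A] M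
  exact_d : ∀ i, Function.Exact (d (i + 1)) (d i)
  exact_ε : Function.Exact (d 0) ε
  surj : Function.Surjective ε
  graded_d : ∀ (i : ℕ) (j : γ) (f : ι (i + 1) →₀ A),
      (∀ k, f k ∈ 𝒜 (j - σ (i + 1) k)) → ∀ k, (d i f) k ∈ 𝒜 (j - σ i k)
  graded_ε : ∀ (j : γ) (f : ι 0 →₀ A),
      (∀ k, f k ∈ 𝒜 (j - σ 0 k)) → ε f ∈ ℳ j
  minimal : ∀ (i : ℕ) (f : ι (i + 1) →₀ A), d i f ∈ 𝔪 • (⊤ : Submodule A (ι i →₀ A))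

/-- Castelnuovo–Mumford regularity read off from a minimal graded free resolution:
`sup { (degree of a generator of F_i) - i }`. -/
noncomputable def MinGradedFreeRes.reg {K : Type} [Field K] {A : Type} [CommRing A]
    [Algebra K A] {𝒜 : ℤ → Submodule K A} {𝔪 : Ideal A} {M : Type} [AddCommGroup M]
    [Module A M] [Module K M] {ℳ : ℤ → Submodule K M}
    (R : MinGradedFreeRes K A 𝒜 𝔪 M ℳ) : ℤ :=
  sSup {x : ℤ | ∃ (i : ℕ) (k : R.ι i), x = R.σ i k - (i : ℤ)}

/-- The graded pieces of a quotient module `A ⧸ J`. -/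
def quotPieces {K A : Type*} [Field K] [CommRing A] [Algebra K A]
    (𝒜 : ℕ → Submodule K A) (J : Ideal A) : ℤ → Submodule K (A ⧸ J) :=
  fun j => (zg 𝒜 j).map ((J.mkQ).restrictScalars K)


/-- The height of an ideal: the infimum of the heights of primes containing it. -/
noncomputable def idealHeight {A : Type*} [CommRing A] (I : Ideal A) : ℕ∞ :=
  ⨅ (p : PrimeSpectrum A) (_ : I ≤ p.asIdeal), Order.height p

/-- The minimal number of generators of an ideal. -/
noncomputable def minGens {A : Type*} [CommRing A] (I : Ideal A) : ℕ :=
  sInf {k : ℕ | ∃ g : Fin k → A, I = Ideal.span (Set.range g)}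

/-- An ideal is a complete intersection if it is generated by a regular sequence. -/
def IsCompleteIntersectionIdeal {R : Type*} [CommRing R] (Q : Ideal R) : Prop :=
  ∃ (k : ℕ) (g : Fin k → R), Q = Ideal.span (Set.range g) ∧ IsRegSeq g

/-- `I` is an almost complete intersection: `μ(I) = ht(I) + 1` and `I` is locally a
complete intersection at each of its minimal primes. -/
def IsACI {A : Type*} [CommRing A] (I : Ideal A) : Prop :=
  (minGens I : ℕ∞) = idealHeight I + 1 ∧
  ∀ p ∈ I.minimalPrimes, ∀ h : p.IsPrime,
    letI := h
    IsCompleteIntersectionIdeal (I.map (algebraMap A (Localization.AtPrime p)))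


structure GRing (A : Type) [CommRing A] where
  p : ℤ → A →+ A
  idem : ∀ i j x, p i (p j x) = if i = j then p j x else 0
  sum : ∀ x, ∃ s : Finset ℤ, ∑ j ∈ s, p j x = x
  neg : ∀ j x, j < 0 → p j x = 0
  mul : ∀ i j a x, p i a = a → p (j + i) (a * x) = a * p j x
  one : p 0 1 = 1

structure GM {A : Type} [CommRing A] (G : GRing A) (M : Type) [AddCommGroup M] [Module A M] where
  p : ℤ → M →+ M
  idem : ∀ i j x, p i (p j x) = if i = j then p j x else 0
  sum : ∀ x, ∃ s : Finset ℤ, ∑ j ∈ s, p j x = x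
  smul : ∀ i j a x, G.p i a = a → p (j + i) (a • x) = a • p j x

section GMsec
variable {A : Type} [CommRing A] {G : GRing A}

def GHom {M N : Type} [AddCommGroup M] [Module A M] [AddCommGroup N] [Module A N]
    (gM : GM G M) (gN : GM G N) (φ : M →ₗ[A] N) : Prop :=
  ∀ j x, gN.p j (φ x) = φ (gM.p j x)

def GStab {M : Type} [AddCommGroup M] [Module A M]
    (gM : GM G M) (N : Submodule A M) : Prop :=
  ∀ j x, x ∈ N → gM.p j x ∈ N

def GM.sub {M : Type} [AddCommGroup M] [Module A M]
    (gM : GM G M) (N : Submodule A M) (h : GStab gM N) : GM G N where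
  p j := ((gM.p j).comp N.toAddSubgroup.subtype).codRestrict N.toAddSubgroup
    (fun x => h j x x.2)
  idem i j x := by
    apply Subtype.ext
    have := gM.idem i j x
    by_cases hij : i = j
    · simp only [hij, if_true] at this ⊢; exact this
    · simp only [hij, if_false] at this ⊢; exact this
  sum x := by
    obtain ⟨s, hs⟩ := gM.sum x
    refine ⟨s, Subtype.ext ?_⟩
    rw [AddSubmonoidClass.coe_finsetSum]
    exact hs
  smul i j a x ha := Subtype.ext (gM.smul i j a x ha)

theorem GM.sub_p {M : Type} [AddCommGroup M] [Module A M]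
    (gM : GM G M) (N : Submodule A M) (h : GStab gM N) (j : ℤ) (x : N) :
    (((gM.sub N h).p j x : N) : M) = gM.p j (x : M) := rfl

def GM.quot {M : Type} [AddCommGroup M] [Module A M]
    (gM : GM G M) (N : Submodule A M) (h : GStab gM N) : GM G (M ⧸ N) where
  p j := QuotientAddGroup.map N.toAddSubgroup N.toAddSubgroup (gM.p j) (fun x hx => h j x hx)
  idem i j x := by
    obtain ⟨x, rfl⟩ := Submodule.Quotient.mk_surjective N x
    have := congrArg (Submodule.Quotient.mk (p := N)) (gM.idem i j x)
    by_cases hij : i = j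
    · simp only [hij, if_true] at this ⊢; exact this
    · simp only [hij, if_false] at this ⊢; exact this
  sum x := by
    obtain ⟨x, rfl⟩ := Submodule.Quotient.mk_surjective N x
    obtain ⟨s, hs⟩ := gM.sum x
    refine ⟨s, ?_⟩
    have := congrArg (N.mkQ) hs
    rw [map_sum] at this
    exact this
  smul i j a x ha := by
    obtain ⟨x, rfl⟩ := Submodule.Quotient.mk_surjective N x
    exact congrArg (Submodule.Quotient.mk (p := N)) (gM.smul i j a x ha)

theorem GM.quot_p {M : Type} [AddCommGroup M] [Module A M]
    (gM : GM G M) (N : Submodule A M) (h : GStab gM N) (j : ℤ) (x : M) :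
    (gM.quot N h).p j (N.mkQ x) = N.mkQ (gM.p j x) := rfl

def GRing.self (G : GRing A) : GM G A where
  p := G.p
  idem := G.idem
  sum := G.sum
  smul i j a x h := G.mul i j a x h

theorem GM.p_sum_ite {M : Type} [AddCommGroup M] [Module A M] (gM : GM G M) (s : Finset ℤ) (x : M)
    (hs : ∑ j ∈ s, gM.p j x = x) (j : ℤ) : gM.p j x = if j ∈ s then gM.p j x else 0 := by
  conv_lhs => rw [← hs, map_sum]
  simp only [gM.idem]
  simp

theorem GM.sum_superset {M : Type} [AddCommGroup M] [Module A M] (gM : GM G M) (s t : Finset ℤ)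
    (x : M) (hs : ∑ j ∈ s, gM.p j x = x) (hst : s ⊆ t) : ∑ j ∈ t, gM.p j x = x := by
  conv_rhs => rw [← hs]
  symm
  apply Finset.sum_subset hst
  intro j _ hj
  rw [gM.p_sum_ite s x hs j, if_neg hj]

def GM.prod {M N : Type} [AddCommGroup M] [Module A M] [AddCommGroup N] [Module A N]
    (gM : GM G M) (gN : GM G N) : GM G (M × N) where
  p j := (gM.p j).prodMap (gN.p j)
  idem i j x := by
    have h1 := gM.idem i j x.1
    have h2 := gN.idem i j x.2
    by_cases hij : i = j
    · simp only [hij, if_true] at h1 h2 ⊢; exact Prod.ext h1 h2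
    · simp only [hij, if_false] at h1 h2 ⊢; exact Prod.ext h1 h2
  sum x := by
    obtain ⟨s, hs⟩ := gM.sum x.1
    obtain ⟨t, ht⟩ := gN.sum x.2
    refine ⟨s ∪ t, Prod.ext ?_ ?_⟩
    · rw [Prod.fst_sum]
      exact gM.sum_superset s (s ∪ t) x.1 hs Finset.subset_union_left
    · rw [Prod.snd_sum]
      exact gN.sum_superset t (s ∪ t) x.2 ht Finset.subset_union_right
  smul i j a x ha := Prod.ext (gM.smul i j a x.1 ha) (gN.smul i j a x.2 ha)


noncomputable def freeP (G : GRing A) {ι : Type} (σ : ι → ℤ) (j : ℤ) : (ι →₀ A) →+ (ι →₀ A) :=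
  Finsupp.liftAddHom (fun k => (Finsupp.singleAddHom k).comp (G.p (j - σ k)))

theorem freeP_single (G : GRing A) {ι : Type} (σ : ι → ℤ) (j : ℤ) (k : ι) (a : A) :
    freeP G σ j (Finsupp.single k a) = Finsupp.single k (G.p (j - σ k) a) := by
  simp [freeP]

theorem freeP_apply (G : GRing A) {ι : Type} (σ : ι → ℤ) (j : ℤ) (x : ι →₀ A) (k : ι) :
    freeP G σ j x k = G.p (j - σ k) (x k) := by
  classical
  induction x using Finsupp.induction_linear with
  | zero => simp
  | add x y hx hy => simp [hx, hy]
  | single l a =>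
    rw [freeP_single]
    by_cases h : l = k
    · subst h; simp
    · simp [h]

noncomputable def GRing.free (G : GRing A) {ι : Type} (σ : ι → ℤ) : GM G (ι →₀ A) where
  p := freeP G σ
  idem i j x := by
    ext k
    rw [freeP_apply, freeP_apply, G.idem]
    by_cases h : i = j
    · simp [h, freeP_apply]
    · rw [if_neg h, if_neg (by omega)]; rfl
  sum x := by
    classical
    choose s hs using fun k => G.sum (x k)
    refine ⟨x.support.biUnion (fun k => (s k).image (fun i => i + σ k)), ?_⟩
    ext k
    rw [Finsupp.finsetSum_apply]
    simp only [freeP_apply]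
    by_cases hk : k ∈ x.support
    · have h1 := G.self.sum_superset (s k)
        ((x.support.biUnion (fun k => (s k).image (fun i => i + σ k))).image (fun j => j - σ k))
        (x k) (hs k) (by
          intro i hi
          rw [Finset.mem_image]
          refine ⟨i + σ k, ?_, by ring⟩
          rw [Finset.mem_biUnion]
          exact ⟨k, hk, Finset.mem_image_of_mem _ hi⟩)
      rw [Finset.sum_image (by intro a _ b _ h; simpa using h)] at h1
      exact h1
    · rw [Finsupp.notMem_support_iff.mp hk]; simp
  smul i j a x ha := by
    ext k
    rw [freeP_apply, Finsupp.smul_apply, Finsupp.smul_apply, freeP_apply, smul_eq_mul, smul_eq_mul,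
      show j + i - σ k = (j - σ k) + i by ring, G.mul _ _ _ _ ha]

theorem GRing.free_p (G : GRing A) {ι : Type} (σ : ι → ℤ) (j : ℤ) (x : ι →₀ A) (k : ι) :
    (G.free σ).p j x k = G.p (j - σ k) (x k) := freeP_apply G σ j x k

theorem GRing.free_p_single (G : GRing A) {ι : Type} (σ : ι → ℤ) (j : ℤ) (k : ι) (a : A) :
    (G.free σ).p j (Finsupp.single k a) = Finsupp.single k (G.p (j - σ k) a) :=
  freeP_single G σ j k a

theorem GM.p_smul {M : Type} [AddCommGroup M] [Module A M] (gM : GM G M) (a : A) (j i : ℤ) (x : M)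
    (hx : gM.p i x = x) : gM.p j (a • x) = G.p (j - i) a • x := by
  obtain ⟨s, hs⟩ := G.sum a
  have h : ∀ l, gM.p j (G.p l a • x) = if l = j - i then G.p l a • x else 0 := by
    intro l
    have h1 : gM.p (j - l + l) (G.p l a • x) = G.p l a • gM.p (j - l) x :=
      gM.smul l (j - l) (G.p l a) x (by rw [G.idem, if_pos rfl])
    rw [sub_add_cancel] at h1
    rw [h1, ← hx, gM.idem]
    by_cases hl : l = j - i
    · rw [if_pos hl, if_pos (by omega)]
    · rw [if_neg hl, if_neg (by omega), smul_zero]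
  have h2 := G.self.p_sum_ite s a hs (j - i)
  conv_lhs => rw [← hs, Finset.sum_smul, map_sum]
  simp only [h]
  rw [Finset.sum_ite_eq']
  change G.p (j - i) a = if j - i ∈ s then G.p (j - i) a else 0 at h2
  split_ifs at h2 ⊢ with h3
  · rfl
  · rw [h2, zero_smul]

/-- homogeneous images of generators give a graded map -/
theorem GHom.of_gens {M : Type} [AddCommGroup M] [Module A M] (gM : GM G M) {ι : Type} (σ : ι → ℤ)
    (φ : (ι →₀ A) →ₗ[A] M) (h : ∀ k, gM.p (σ k) (φ (Finsupp.single k 1)) = φ (Finsupp.single k 1)) :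
    GHom (G.free σ) gM φ := by
  intro j x
  induction x using Finsupp.induction_linear with
  | zero => simp
  | add x y hx hy => simp [hx, hy]
  | single k a =>
    rw [G.free_p_single]
    have e : ∀ b : A, φ (Finsupp.single k b) = b • φ (Finsupp.single k 1) := by
      intro b; rw [← map_smul, Finsupp.smul_single, smul_eq_mul, mul_one]
    rw [e a, e (G.p _ a)]
    exact gM.p_smul a j (σ k) _ (h k)

theorem GHom.gens {M : Type} [AddCommGroup M] [Module A M] {gM : GM G M} {ι : Type} {σ : ι → ℤ}
    {φ : (ι →₀ A) →ₗ[A] M} (h : GHom (G.free σ) gM φ) (k : ι) :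
    gM.p (σ k) (φ (Finsupp.single k 1)) = φ (Finsupp.single k 1) := by
  rw [h, G.free_p_single, sub_self, G.one]

theorem GHom.comp {M N L : Type} [AddCommGroup M] [Module A M] [AddCommGroup N] [Module A N]
    [AddCommGroup L] [Module A L] {gM : GM G M} {gN : GM G N} {gL : GM G L}
    {g : N →ₗ[A] L} {f : M →ₗ[A] N} (hg : GHom gN gL g) (hf : GHom gM gN f) :
    GHom gM gL (g ∘ₗ f) := by
  intro j x
  simp only [LinearMap.comp_apply]
  rw [hg, hf]

theorem GHom.ker {M N : Type} [AddCommGroup M] [Module A M] [AddCommGroup N] [Module A N]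
    {gM : GM G M} {gN : GM G N} {f : M →ₗ[A] N} (hf : GHom gM gN f) :
    GStab gM (LinearMap.ker f) := by
  intro j x hx
  rw [LinearMap.mem_ker] at hx ⊢
  rw [← hf, hx, map_zero]

theorem GHom.range {M N : Type} [AddCommGroup M] [Module A M] [AddCommGroup N] [Module A N]
    {gM : GM G M} {gN : GM G N} {f : M →ₗ[A] N} (hf : GHom gM gN f) :
    GStab gN (LinearMap.range f) := by
  rintro j _ ⟨y, rfl⟩
  exact ⟨gM.p j y, (hf j y).symm⟩

/-- factor through an injective graded map -/
theorem GHom.factor {M N L : Type} [AddCommGroup M] [Module A M] [AddCommGroup N] [Module A N]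
    [AddCommGroup L] [Module A L] {gM : GM G M} {gN : GM G N} {gL : GM G L}
    {f : M →ₗ[A] N} {h : L →ₗ[A] N} (hf : GHom gM gN f) (hh : GHom gL gN h)
    (hi : Function.Injective f) (hr : ∀ x, ∃ y, f y = h x) :
    ∃ q : L →ₗ[A] M, GHom gL gM q ∧ ∀ x, f (q x) = h x := by
  choose q hq using hr
  refine ⟨{ toFun := q, map_add' := ?_, map_smul' := ?_ }, ?_, hq⟩
  · intro x y; apply hi; rw [map_add, hq, hq, hq, map_add]
  · intro a x; apply hi; rw [map_smul, hq, hq, map_smul, RingHom.id_apply]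
  · intro j x
    apply hi
    change f (gM.p j (q x)) = f (q (gL.p j x))
    rw [← hf, hq, hq, hh]

/-- lift a graded map from a free module along a graded surjection -/
theorem GHom.lift {M N : Type} [AddCommGroup M] [Module A M] [AddCommGroup N] [Module A N]
    {gM : GM G M} {gN : GM G N} {g : M →ₗ[A] N} (hg : GHom gM gN g) (hs : Function.Surjective g)
    {ι : Type} {σ : ι → ℤ} {φ : (ι →₀ A) →ₗ[A] N} (hφ : GHom (G.free σ) gN φ) :
    ∃ ψ : (ι →₀ A) →ₗ[A] M, GHom (G.free σ) gM ψ ∧ ∀ x, g (ψ x) = φ x := by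
  choose r hr using hs
  let ψ : (ι →₀ A) →ₗ[A] M :=
    Finsupp.linearCombination A (fun k => gM.p (σ k) (r (φ (Finsupp.single k 1))))
  have e : ∀ k, ψ (Finsupp.single k 1) = gM.p (σ k) (r (φ (Finsupp.single k 1))) := by
    intro k; simp [ψ]
  refine ⟨ψ, GHom.of_gens gM σ ψ (fun k => ?_), fun x => ?_⟩
  · rw [e, gM.idem, if_pos rfl]
  · have : g ∘ₗ ψ = φ := by
      apply Finsupp.lhom_ext'
      intro k
      apply LinearMap.ext_ring
      simp only [LinearMap.comp_apply, Finsupp.lsingle_apply]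
      rw [e, ← hg, hr, hφ.gens]
    rw [← this]; rfl

end GMsec

section Psec
variable {A : Type} [CommRing A] {G : GRing A}

def RegP (G : GRing A) : ℕ → ℤ → ∀ (M : Type) [AddCommGroup M] [Module A M], GM G M → Prop
  | 0, _, _, _, _, _ => True
  | n + 1, t, M, _, _, gM => ∃ (ι : Type) (σ : ι → ℤ) (φ : (ι →₀ A) →ₗ[A] M)
      (hφ : GHom (G.free σ) gM φ), (∀ k, σ k ≤ t) ∧ Function.Surjective φ ∧
      RegP G n (t + 1) (LinearMap.ker φ) ((G.free σ).sub _ hφ.ker)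

theorem RegP.shift (n : ℕ) : ∀ (t a : ℤ) {M N : Type} [AddCommGroup M] [Module A M]
    [AddCommGroup N] [Module A N] (gM : GM G M) (gN : GM G N) (e : M ≃ₗ[A] N)
    (_ : ∀ j x, gN.p j (e x) = e (gM.p (j - a) x)) (_ : RegP G n t M gM),
    RegP G n (t + a) N gN := by
  induction n with
  | zero => intros; trivial
  | succ n ih =>
    intro t a M N _ _ _ _ gM gN e he h
    obtain ⟨ι, σ, φ, hφ, hσ, hs, hL⟩ := h
    have hp : ∀ j x, (G.free (fun k => σ k + a)).p j x = (G.free σ).p (j - a) x := by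
      intro j x
      ext k
      rw [G.free_p, G.free_p]
      congr 2
      ring
    have hφ' : GHom (G.free (fun k => σ k + a)) gN (e.toLinearMap ∘ₗ φ) := by
      intro j x
      simp only [LinearMap.comp_apply, LinearEquiv.coe_coe]
      rw [he, hφ, hp]
    refine ⟨ι, fun k => σ k + a, e.toLinearMap ∘ₗ φ, hφ', fun k => by linarith [hσ k],
      e.surjective.comp hs, ?_⟩
    have hk : LinearMap.ker φ = LinearMap.ker (e.toLinearMap ∘ₗ φ) := by
      ext x; simp
    rw [show t + a + 1 = t + 1 + a by ring]
    refine ih (t + 1) a _ _ (LinearEquiv.ofEq _ _ hk) ?_ hL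
    intro j x
    apply Subtype.ext
    exact hp j x

theorem RegP.mono (n : ℕ) : ∀ (t t' : ℤ) (_ : t ≤ t') {M : Type} [AddCommGroup M] [Module A M]
    (gM : GM G M) (_ : RegP G n t M gM), RegP G n t' M gM := by
  induction n with
  | zero => intros; trivial
  | succ n ih =>
    intro t t' htt M _ _ gM h
    obtain ⟨ι, σ, φ, hφ, hσ, hs, hL⟩ := h
    exact ⟨ι, σ, φ, hφ, fun k => (hσ k).trans htt, hs, ih _ _ (by linarith) _ hL⟩

theorem RegP.of_subsingleton (n : ℕ) : ∀ (t : ℤ) {M : Type} [AddCommGroup M] [Module A M]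
    [Subsingleton M] (gM : GM G M), RegP G n t M gM := by
  induction n with
  | zero => intros; trivial
  | succ n ih =>
    intro t M _ _ _ gM
    refine ⟨PEmpty, PEmpty.elim, 0, fun j x => Subsingleton.elim _ _, fun k => k.elim,
      fun x => ⟨0, Subsingleton.elim _ _⟩, ih _ _⟩

theorem RegP.free (n : ℕ) (t : ℤ) {ι : Type} (σ : ι → ℤ) (h : ∀ k, σ k ≤ t) :
    RegP G n t (ι →₀ A) (G.free σ) := by
  cases n with
  | zero => trivial
  | succ n =>
    refine ⟨ι, σ, LinearMap.id, fun j x => rfl, h, Function.surjective_id, ?_⟩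
    have : Subsingleton (LinearMap.ker (LinearMap.id : (ι →₀ A) →ₗ[A] (ι →₀ A))) := by
      rw [LinearMap.ker_id]; infer_instance
    exact RegP.of_subsingleton n _ _

/-- extensions -/
theorem RegP.ext (n : ℕ) : ∀ (t : ℤ) {M' M M'' : Type} [AddCommGroup M'] [Module A M']
    [AddCommGroup M] [Module A M] [AddCommGroup M''] [Module A M'']
    (g' : GM G M') (gM : GM G M) (g'' : GM G M'') (f : M' →ₗ[A] M) (g : M →ₗ[A] M'')
    (_ : GHom g' gM f) (_ : GHom gM g'' g) (_ : Function.Injective f) (_ : Function.Surjective g)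
    (_ : Function.Exact f g) (_ : RegP G n t M' g') (_ : RegP G n t M'' g''),
    RegP G n t M gM := by
  induction n with
  | zero => intros; trivial
  | succ n ih =>
    intro t M' M M'' _ _ _ _ _ _ g' gM g'' f g hf hg hi hsur hex h' h''
    obtain ⟨ι', σ', φ', hφ', hσ', hs', hL'⟩ := h'
    obtain ⟨ι'', σ'', φ'', hφ'', hσ'', hs'', hL''⟩ := h''
    obtain ⟨ψ, hψ, hψe⟩ := hg.lift hsur hφ''
    -- the map on the direct sum
    let i1 : (ι' →₀ A) →ₗ[A] (ι' ⊕ ι'' →₀ A) := Finsupp.lmapDomain A A Sum.inl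
    let i2 : (ι'' →₀ A) →ₗ[A] (ι' ⊕ ι'' →₀ A) := Finsupp.lmapDomain A A Sum.inr
    let p1 : (ι' ⊕ ι'' →₀ A) →ₗ[A] (ι' →₀ A) := Finsupp.lcomapDomain Sum.inl Sum.inl_injective
    let p2 : (ι' ⊕ ι'' →₀ A) →ₗ[A] (ι'' →₀ A) := Finsupp.lcomapDomain Sum.inr Sum.inr_injective
    let σ : ι' ⊕ ι'' → ℤ := Sum.elim σ' σ''
    have hp1 : GHom (G.free σ) (G.free σ') p1 := by
      intro j x; ext k; rw [G.free_p]
      exact (G.free_p σ j x (Sum.inl k)).symm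
    have hp2 : GHom (G.free σ) (G.free σ'') p2 := by
      intro j x; ext k; rw [G.free_p]
      exact (G.free_p σ j x (Sum.inr k)).symm
    have hi1 : GHom (G.free σ') (G.free σ) i1 := by
      apply GHom.of_gens
      intro k
      simp only [i1, Finsupp.lmapDomain_apply, Finsupp.mapDomain_single]
      rw [G.free_p_single]; simp [σ, G.one]
    have p1i1 : ∀ x, p1 (i1 x) = x := by
      intro x; ext k
      exact Finsupp.mapDomain_apply Sum.inl_injective x k
    have p2i2 : ∀ x, p2 (i2 x) = x := by
      intro x; ext k
      exact Finsupp.mapDomain_apply Sum.inr_injective x k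
    have p2i1 : ∀ x, p2 (i1 x) = 0 := by
      intro x; ext k
      exact Finsupp.mapDomain_of_notMem_range _ _ (by simp)
    have p1i2 : ∀ x, p1 (i2 x) = 0 := by
      intro x; ext k
      exact Finsupp.mapDomain_of_notMem_range _ _ (by simp)
    have hsum : ∀ y, p2 y = 0 → i1 (p1 y) = y := by
      intro y hy
      ext k
      rcases k with k | k
      · exact Finsupp.mapDomain_apply Sum.inl_injective _ k
      · have h1 : y (Sum.inr k) = 0 := DFunLike.congr_fun hy k
        rw [h1]
        exact Finsupp.mapDomain_of_notMem_range _ _ (by simp)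
    let Φ : (ι' ⊕ ι'' →₀ A) →ₗ[A] M := f ∘ₗ φ' ∘ₗ p1 + ψ ∘ₗ p2
    have hΦa : ∀ x, Φ x = f (φ' (p1 x)) + ψ (p2 x) := fun x => rfl
    have hΦ : GHom (G.free σ) gM Φ := by
      intro j x
      rw [hΦa, hΦa, map_add, hf, hφ', hp1, hψ, hp2]
    have hgf : ∀ x, g (f x) = 0 := fun x => (hex (f x)).mpr ⟨x, rfl⟩
    have hgΦ : ∀ x, g (Φ x) = φ'' (p2 x) := by
      intro x; rw [hΦa, map_add, hgf, hψe, zero_add]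
    refine ⟨ι' ⊕ ι'', σ, Φ, hΦ, ?_, ?_, ?_⟩
    · rintro (k | k)
      · exact hσ' k
      · exact hσ'' k
    · intro y
      obtain ⟨z, hz⟩ := hs'' (g y)
      obtain ⟨w, hw⟩ := (hex (y - ψ z)).mp (by rw [map_sub, hψe, hz, sub_self])
      obtain ⟨v, hv⟩ := hs' w
      refine ⟨i1 v + i2 z, ?_⟩
      rw [hΦa, map_add p1, map_add p2, p1i1, p1i2, p2i1, p2i2, add_zero, zero_add, hv, hw]
      abel
    · let fL : LinearMap.ker φ' →ₗ[A] LinearMap.ker Φ :=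
        (i1 ∘ₗ (LinearMap.ker φ').subtype).codRestrict _ (by
          rintro ⟨x, hx⟩
          rw [LinearMap.mem_ker] at hx ⊢
          change Φ (i1 x) = 0
          rw [hΦa, p1i1, p2i1, hx, map_zero, map_zero, add_zero])
      let gL : LinearMap.ker Φ →ₗ[A] LinearMap.ker φ'' :=
        (p2 ∘ₗ (LinearMap.ker Φ).subtype).codRestrict _ (by
          rintro ⟨x, hx⟩
          rw [LinearMap.mem_ker] at hx ⊢
          change φ'' (p2 x) = 0
          rw [← hgΦ, hx, map_zero])
      refine ih (t + 1) _ _ _ fL gL ?_ ?_ ?_ ?_ ?_ hL' hL''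
      · intro j x; exact Subtype.ext (hi1 j x)
      · intro j x; exact Subtype.ext (hp2 j x)
      · intro x y hxy
        apply Subtype.ext
        have : i1 x = i1 y := congrArg Subtype.val hxy
        rw [← p1i1 x, this, p1i1]
      · rintro ⟨z, hz⟩
        rw [LinearMap.mem_ker] at hz
        obtain ⟨w, hw⟩ := (hex (ψ z)).mp (by rw [hψe, hz])
        obtain ⟨v, hv⟩ := hs' (-w)
        refine ⟨⟨i1 v + i2 z, ?_⟩, Subtype.ext ?_⟩
        · rw [LinearMap.mem_ker, hΦa, map_add p1, map_add p2, p1i1, p1i2, p2i1, p2i2, add_zero, zero_add,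
            hv, map_neg, hw]
          abel
        · change p2 (i1 v + i2 z) = z
          rw [map_add, p2i1, p2i2, zero_add]
      · rintro ⟨y, hy⟩
        constructor
        · intro h
          have h1 : p2 y = 0 := congrArg Subtype.val h
          refine ⟨⟨p1 y, ?_⟩, Subtype.ext (hsum y h1)⟩
          rw [LinearMap.mem_ker] at hy ⊢
          rw [hΦa, h1, map_zero, add_zero] at hy
          apply hi
          rw [hy, map_zero]
        · rintro ⟨x, hx⟩
          rw [← hx]
          exact Subtype.ext (p2i1 x)

/-- cokernels -/
theorem RegP.coker (n : ℕ) (t : ℤ) {M' M M'' : Type} [AddCommGroup M'] [Module A M']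
    [AddCommGroup M] [Module A M] [AddCommGroup M''] [Module A M'']
    (g' : GM G M') (gM : GM G M) (g'' : GM G M'') (f : M' →ₗ[A] M) (g : M →ₗ[A] M'')
    (hf : GHom g' gM f) (hg : GHom gM g'' g) (hi : Function.Injective f)
    (hsur : Function.Surjective g)
    (hex : Function.Exact f g) (h : RegP G (n + 1) t M gM) (h' : RegP G n (t + 1) M' g') :
    RegP G (n + 1) t M'' g'' := by
  obtain ⟨ι, σ, φ, hφ, hσ, hs, hL⟩ := h
  refine ⟨ι, σ, g ∘ₗ φ, hg.comp hφ, hσ, hsur.comp hs, ?_⟩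
  have hle : ∀ x, x ∈ LinearMap.ker φ → x ∈ LinearMap.ker (g ∘ₗ φ) := by
    intro x hx
    rw [LinearMap.mem_ker] at hx ⊢
    rw [LinearMap.comp_apply, hx, map_zero]
  have hh : GHom ((G.free σ).sub _ (hg.comp hφ).ker) gM
      (φ ∘ₗ (LinearMap.ker (g ∘ₗ φ)).subtype) := by
    intro j x; exact hφ j x
  obtain ⟨q, hq, hqe⟩ := hf.factor hh hi (by
    rintro ⟨x, hx⟩
    exact (hex (φ x)).mp hx)
  refine RegP.ext n (t + 1) ((G.free σ).sub _ hφ.ker) ((G.free σ).sub _ (hg.comp hφ).ker) g'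
    (Submodule.inclusion hle) q (fun j x => rfl) hq (Submodule.inclusion_injective hle) ?_ ?_ hL h'
  · intro y
    obtain ⟨x, hx⟩ := hs (f y)
    refine ⟨⟨x, ?_⟩, ?_⟩
    · rw [LinearMap.mem_ker, LinearMap.comp_apply, hx]
      exact (hex (f y)).mpr ⟨y, rfl⟩
    · apply hi
      rw [hqe]
      exact hx
  · rintro ⟨x, hx⟩
    constructor
    · intro h0
      have h1 := hqe ⟨x, hx⟩
      rw [h0, map_zero] at h1
      exact ⟨⟨x, h1.symm⟩, rfl⟩
    · rintro ⟨y, hy⟩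
      apply hi
      rw [hqe, map_zero, ← hy]
      exact y.2

/-- kernels -/
theorem RegP.kern (n : ℕ) (t : ℤ) {M' M M'' : Type} [AddCommGroup M'] [Module A M']
    [AddCommGroup M] [Module A M] [AddCommGroup M''] [Module A M'']
    (g' : GM G M') (gM : GM G M) (g'' : GM G M'') (f : M' →ₗ[A] M) (g : M →ₗ[A] M'')
    (hf : GHom g' gM f) (hg : GHom gM g'' g) (hi : Function.Injective f)
    (hsur : Function.Surjective g)
    (hex : Function.Exact f g) (h : RegP G n t M gM) (h'' : RegP G (n + 1) (t - 1) M'' g'') :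
    RegP G n t M' g' := by
  cases n with
  | zero => trivial
  | succ n =>
  obtain ⟨ι, σ, φ, hφ, hσ, hs, hL⟩ := h''
  rw [sub_add_cancel] at hL
  obtain ⟨ψ, hψ, hψe⟩ := hg.lift hsur hφ
  have hgf : ∀ x, g (f x) = 0 := fun x => (hex (f x)).mpr ⟨x, rfl⟩
  have hh : GHom ((G.free σ).sub _ hφ.ker) gM (ψ ∘ₗ (LinearMap.ker φ).subtype) := by
    intro j x; exact hψ j x
  obtain ⟨q, hq, hqe⟩ := hf.factor hh hi (by
    rintro ⟨x, hx⟩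
    refine (hex (ψ x)).mp ?_
    rw [hψe]; exact hx)
  let a : LinearMap.ker φ →ₗ[A] (M' × (ι →₀ A)) := LinearMap.prod (-q) (LinearMap.ker φ).subtype
  let b : (M' × (ι →₀ A)) →ₗ[A] M := LinearMap.coprod f ψ
  have hb : ∀ x y, b (x, y) = f x + ψ y := fun x y => by simp [b]
  have hprod : RegP G (n + 1) t (M' × (ι →₀ A)) (g'.prod (G.free σ)) := by
    refine RegP.ext (n + 1) t _ _ _ a b ?_ ?_ ?_ ?_ ?_ hL h
    · intro j x
      refine Prod.ext ?_ rfl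
      change g'.p j (-(q x)) = -(q _)
      rw [map_neg, hq]
    · rintro j ⟨x, y⟩
      change gM.p j (b (x, y)) = b (g'.p j x, (G.free σ).p j y)
      rw [hb, hb, map_add, hf, hψ]
    · intro x y hxy
      exact Subtype.ext (congrArg Prod.snd hxy)
    · intro y
      obtain ⟨z, hz⟩ := hs (g y)
      obtain ⟨w, hw⟩ := (hex (y - ψ z)).mp (by rw [map_sub, hψe, hz, sub_self])
      exact ⟨(w, z), by rw [hb, hw]; abel⟩
    · rintro ⟨x, y⟩
      constructor
      · intro h0
        rw [hb] at h0
        have hy : φ y = 0 := by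
          have := congrArg g h0
          rwa [map_add, hgf, hψe, zero_add, map_zero] at this
        refine ⟨⟨y, hy⟩, Prod.ext ?_ rfl⟩
        change -(q ⟨y, hy⟩) = x
        apply hi
        rw [map_neg, hqe]
        exact (eq_neg_of_add_eq_zero_left h0).symm
      · rintro ⟨z, hz⟩
        rw [← hz]
        change b (-(q z), z) = 0
        rw [hb, map_neg, hqe]
        exact neg_add_cancel _
  refine RegP.coker n t (G.free σ) (g'.prod (G.free σ)) g' (LinearMap.inr A M' (ι →₀ A))
    (LinearMap.fst A M' (ι →₀ A)) ?_ ?_ ?_ ?_ ?_ hprod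
    (RegP.free n (t + 1) σ (fun k => by linarith [hσ k]))
  · intro j x; exact Prod.ext (map_zero (g'.p j)) rfl
  · intro j x; rfl
  · exact LinearMap.inr_injective
  · exact LinearMap.fst_surjective
  · exact Function.Exact.inr_fst

def RegLe (t : ℤ) {M : Type} [AddCommGroup M] [Module A M] (gM : GM G M) : Prop :=
  ∀ n, RegP G n t M gM

end Psec

section Csec
variable {A : Type} [CommRing A] {G : GRing A}

def GM.shift {M : Type} [AddCommGroup M] [Module A M] (gM : GM G M) (e : ℤ) : GM G M where
  p j := gM.p (j - e)
  idem i j x := by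
    rw [gM.idem]
    by_cases h : i = j
    · rw [if_pos h, if_pos (by omega)]
    · rw [if_neg h, if_neg (by omega)]
  sum x := by
    obtain ⟨s, hs⟩ := gM.sum x
    refine ⟨s.image (fun i => i + e), ?_⟩
    rw [Finset.sum_image (by intro a _ b _ h; simpa using h)]
    simpa using hs
  smul i j a x ha := by
    rw [show j + i - e = j - e + i by ring, gM.smul _ _ _ _ ha]

theorem RegLe.shift {M : Type} [AddCommGroup M] [Module A M] {gM : GM G M} {t : ℤ}
    (h : RegLe t gM) (e : ℤ) : RegLe (t + e) (gM.shift e) :=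
  fun n => RegP.shift n t e gM (gM.shift e) (LinearEquiv.refl A M) (fun _ _ => rfl) (h n)

theorem RegLe.unshift {M : Type} [AddCommGroup M] [Module A M] {gM : GM G M} {t : ℤ} {e : ℤ}
    (h : RegLe t (gM.shift e)) : RegLe (t - e) gM :=
  fun n => RegP.shift n t (-e) (gM.shift e) gM (LinearEquiv.refl A M) (fun j x => by
    change gM.p j x = gM.p (j - -e - e) x
    congr 2; ring) (h n)

theorem RegLe.mono {M : Type} [AddCommGroup M] [Module A M] {gM : GM G M} {t t' : ℤ}
    (h : RegLe t gM) (ht : t ≤ t') : RegLe t' gM := fun n => RegP.mono n t t' ht gM (h n)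

def RQ (G : GRing A) (t : ℤ) (I : Submodule A A) : Prop :=
  ∃ h : GStab G.self I, RegLe t (G.self.quot I h)

theorem RQ.mono {t t' : ℤ} {I : Submodule A A} (h : RQ G t I) (ht : t ≤ t') : RQ G t' I :=
  ⟨h.1, h.2.mono ht⟩

theorem GRing.p_mul (G : GRing A) (a x : A) : ∃ s : Finset ℤ, ∀ j,
    G.p j (a * x) = ∑ i ∈ s, G.p i a * G.p (j - i) x := by
  obtain ⟨s, hs⟩ := G.sum a
  refine ⟨s, fun j => ?_⟩
  conv_lhs => rw [← hs, Finset.sum_mul, map_sum]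
  refine Finset.sum_congr rfl fun i _ => ?_
  have := G.mul i (j - i) (G.p i a) x (by rw [G.idem, if_pos rfl])
  rwa [sub_add_cancel] at this

theorem GStab.span {s : Set A} (h : ∀ x ∈ s, ∃ e, G.p e x = x) :
    GStab G.self (Ideal.span s) := by
  intro j x hx
  revert j
  induction hx using Submodule.span_induction with
  | mem x hx =>
    intro j
    obtain ⟨e, he⟩ := h x hx
    have : G.p j x = if j = e then x else 0 := by
      conv_lhs => rw [← he]
      rw [G.idem, he]
    change G.p j x ∈ _
    rw [this]
    split_ifs
    · exact Ideal.subset_span hx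
    · exact zero_mem _
  | zero => intro j; rw [map_zero]; exact zero_mem _
  | add x y _ _ hx hy => intro j; rw [map_add]; exact add_mem (hx j) (hy j)
  | smul a x _ hx =>
    intro j
    obtain ⟨s, hs⟩ := G.p_mul a x
    change G.p j (a * x) ∈ _
    rw [hs]
    exact sum_mem fun i _ => Ideal.mul_mem_left _ _ (hx _)

theorem GStab.sup {I J : Submodule A A} (hI : GStab G.self I) (hJ : GStab G.self J) :
    GStab G.self (I ⊔ J) := by
  intro j x hx
  obtain ⟨a, ha, b, hb, rfl⟩ := Submodule.mem_sup.mp hx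
  rw [map_add]
  exact add_mem (Submodule.mem_sup_left (hI j a ha)) (Submodule.mem_sup_right (hJ j b hb))

theorem GStab.mul {I J : Ideal A} (hI : GStab G.self I) (hJ : GStab G.self J) :
    GStab G.self (I * J : Ideal A) := by
  intro j x hx
  refine Submodule.mul_induction_on hx ?_ ?_
  · intro a ha b hb
    obtain ⟨s, hs⟩ := G.p_mul a b
    change G.p j (a * b) ∈ _
    rw [hs]
    exact sum_mem fun i _ => Ideal.mul_mem_mul (hI i a ha) (hJ _ b hb)
  · intro a b ha hb
    rw [map_add]; exact add_mem ha hb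

theorem GStab.pow {I : Ideal A} (hI : GStab G.self I) (s : ℕ) :
    GStab G.self (I ^ s : Ideal A) := by
  induction s with
  | zero => intro j x _; rw [pow_zero, Ideal.one_eq_top]; exact Submodule.mem_top
  | succ s ih => rw [pow_succ]; exact ih.mul hI

section cyc
variable {e : ℤ} {g : A} {C I I' : Ideal A}

theorem cyc_data (hg : G.p e g = g) (hC : ∀ a, a ∈ C ↔ a * g ∈ I) (hI' : I' = I ⊔ Ideal.span {g})
    (hI : GStab G.self I) : ∃ (hCs : GStab G.self C) (hIs' : GStab G.self I')
    (α : (A ⧸ (C : Submodule A A)) →ₗ[A] (A ⧸ (I : Submodule A A)))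
    (β : (A ⧸ (I : Submodule A A)) →ₗ[A] (A ⧸ (I' : Submodule A A))),
    GHom ((G.self.quot C hCs).shift e) (G.self.quot I hI) α ∧
    GHom (G.self.quot I hI) (G.self.quot I' hIs') β ∧ Function.Injective α ∧
    Function.Surjective β ∧ Function.Exact α β := by
  have hgm : ∀ j a, G.p (j + e) (a * g) = G.p j a * g := by
    intro j a; rw [mul_comm, G.mul e j g a hg, mul_comm]
  have hCs : GStab G.self C := by
    intro j a ha
    rw [hC] at ha ⊢
    change G.p j a * g ∈ I
    rw [← hgm]
    exact hI _ _ ha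
  have hIs' : GStab G.self I' := by
    rw [hI']
    exact hI.sup (GStab.span (by rintro x rfl; exact ⟨e, hg⟩))
  have hle : (I : Submodule A A) ≤ Submodule.comap LinearMap.id (I' : Submodule A A) := by
    intro x hx; rw [hI']; exact Submodule.mem_sup_left hx
  have hle2 : (C : Submodule A A) ≤
      Submodule.comap (LinearMap.mulRight A g) (I : Submodule A A) := by
    intro x hx; exact (hC x).mp hx
  refine ⟨hCs, hIs', Submodule.mapQ _ _ (LinearMap.mulRight A g) hle2,
    Submodule.mapQ _ _ LinearMap.id hle, ?_, ?_, ?_, ?_, ?_⟩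
  · intro j x
    obtain ⟨x, rfl⟩ := Submodule.mkQ_surjective _ x
    change Submodule.mkQ I (G.p j (x * g)) = Submodule.mkQ I (G.p (j - e) x * g)
    rw [← hgm, sub_add_cancel]
  · intro j x
    obtain ⟨x, rfl⟩ := Submodule.mkQ_surjective _ x
    rfl
  · rw [← LinearMap.ker_eq_bot, LinearMap.ker_eq_bot']
    intro x hx
    obtain ⟨x, rfl⟩ := Submodule.mkQ_surjective _ x
    have h1 : x * g ∈ I := (Submodule.Quotient.mk_eq_zero _).mp hx
    exact (Submodule.Quotient.mk_eq_zero _).mpr ((hC x).mpr h1)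
  · intro x
    obtain ⟨x, rfl⟩ := Submodule.mkQ_surjective _ x
    exact ⟨Submodule.mkQ _ x, rfl⟩
  · intro x
    obtain ⟨x, rfl⟩ := Submodule.mkQ_surjective _ x
    constructor
    · intro h
      have h1 : x ∈ I' := (Submodule.Quotient.mk_eq_zero _).mp h
      rw [hI'] at h1
      obtain ⟨a, ha, b, hb, rfl⟩ := Submodule.mem_sup.mp h1
      obtain ⟨c, rfl⟩ := Ideal.mem_span_singleton'.mp hb
      refine ⟨Submodule.mkQ _ c, ?_⟩
      change Submodule.mkQ I (c * g) = Submodule.mkQ I (a + c * g)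
      rw [map_add, Submodule.mkQ_apply I a, (Submodule.Quotient.mk_eq_zero _).mpr ha, zero_add]
    · rintro ⟨y, hy⟩
      obtain ⟨y, rfl⟩ := Submodule.mkQ_surjective _ y
      rw [← hy]
      apply (Submodule.Quotient.mk_eq_zero _).mpr
      change y * g ∈ I'
      rw [hI']
      exact Submodule.mem_sup_right (Ideal.mul_mem_left _ _ (Ideal.mem_span_singleton_self g))

theorem cyc1 {t : ℤ} (hg : G.p e g = g) (hC : ∀ a, a ∈ C ↔ a * g ∈ I)
    (hI' : I' = I ⊔ Ideal.span {g}) (hI : GStab G.self I)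
    (h1 : RQ G (t - e) C) (h2 : RQ G t I') : RQ G t I := by
  obtain ⟨hCs, hIs', α, β, hα, hβ, hi, hs, hex⟩ := cyc_data hg hC hI' hI
  refine ⟨hI, fun n => RegP.ext n t _ _ _ α β hα hβ hi hs hex ?_ (h2.2 n)⟩
  have := h1.2.shift e n
  rwa [sub_add_cancel] at this

theorem cyc2 {t : ℤ} (hg : G.p e g = g) (hC : ∀ a, a ∈ C ↔ a * g ∈ I)
    (hI' : I' = I ⊔ Ideal.span {g})
    (h1 : RQ G t I) (h2 : RQ G (t + 1 - e) C) : RQ G t I' := by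
  obtain ⟨hCs, hIs', α, β, hα, hβ, hi, hs, hex⟩ := cyc_data hg hC hI' h1.1
  refine ⟨hIs', fun n => ?_⟩
  cases n with
  | zero => trivial
  | succ n =>
    refine RegP.coker n t _ _ _ α β hα hβ hi hs hex (h1.2 (n + 1)) ?_
    have := h2.2.shift e n
    rwa [sub_add_cancel] at this

theorem cyc3 {t : ℤ} (hg : G.p e g = g) (hC : ∀ a, a ∈ C ↔ a * g ∈ I)
    (hI' : I' = I ⊔ Ideal.span {g})
    (h1 : RQ G t I) (h2 : RQ G (t - 1) I') : RQ G (t - e) C := by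
  obtain ⟨hCs, hIs', α, β, hα, hβ, hi, hs, hex⟩ := cyc_data hg hC hI' h1.1
  refine ⟨hCs, RegLe.unshift fun n => ?_⟩
  exact RegP.kern n t _ _ _ α β hα hβ hi hs hex (h1.2 n) (h2.2 (n + 1))

end cyc

theorem RQ.bot : RQ G 0 (⊥ : Ideal A) := by
  have hb : GStab G.self (⊥ : Ideal A) := by
    intro j x hx
    rw [(Submodule.mem_bot A).mp hx, map_zero]; exact zero_mem _
  refine ⟨hb, fun n => ?_⟩
  have h := RegP.free (G := G) n 0 (fun _ : Unit => 0) (fun _ => le_rfl)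
  let e : (Unit →₀ A) ≃ₗ[A] (A ⧸ (⊥ : Submodule A A)) :=
    (Finsupp.uniqueLinearEquiv A A ()).trans (Submodule.quotEquivOfEqBot ⊥ rfl).symm
  refine RegP.shift n 0 0 (G.free (fun _ : Unit => 0)) _ e ?_ h
  intro j x
  change Submodule.mkQ _ (G.p j (x ())) = Submodule.mkQ _ ((G.free _).p (j - 0) x ())
  rw [G.free_p, sub_zero, sub_zero]

theorem RQ.bot_not [Nontrivial A] : ¬ RQ G (-1) (⊥ : Ideal A) := by
  rintro ⟨hb, h⟩
  obtain ⟨ι, σ, φ, hφ, hσ, hs, -⟩ := h 1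
  have h0 : φ = 0 := by
    apply Finsupp.lhom_ext'
    intro k
    apply LinearMap.ext_ring
    have := hφ.gens k
    simp only [LinearMap.comp_apply, Finsupp.lsingle_apply, LinearMap.zero_apply]
    rw [← this]
    obtain ⟨y, hy⟩ := Submodule.mkQ_surjective _ (φ (Finsupp.single k 1))
    rw [← hy, GM.quot_p]
    change Submodule.mkQ _ (G.p (σ k) y) = 0
    rw [G.neg _ _ (by linarith [hσ k]), map_zero]
  obtain ⟨x, hx⟩ := hs (Submodule.mkQ _ 1)
  rw [h0, LinearMap.zero_apply] at hx
  have := (Submodule.Quotient.mk_eq_zero _).mp hx.symm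
  exact one_ne_zero ((Submodule.mem_bot A).mp this)

theorem RQ.top (t : ℤ) : RQ G t (⊤ : Ideal A) := by
  refine ⟨fun _ _ _ => Submodule.mem_top, fun n => ?_⟩
  have : Subsingleton (A ⧸ (⊤ : Submodule A A)) := by
    rw [Submodule.Quotient.subsingleton_iff]
  exact RegP.of_subsingleton n _ _

/-- partial ideals -/
def Jp {N : ℕ} (f : Fin N → A) (i : ℕ) : Ideal A := Ideal.span (f '' {j | (j : ℕ) < i})

theorem Jp_zero {N : ℕ} (f : Fin N → A) : Jp f 0 = ⊥ := by simp [Jp]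

theorem Jp_succ {N : ℕ} (f : Fin N → A) (i : Fin N) :
    Jp f (i + 1) = Jp f i ⊔ Ideal.span {f i} := by
  rw [Jp, Jp, ← Ideal.span_union]
  congr 1
  ext x
  simp only [Set.mem_image, Set.mem_ofPred_eq, Set.mem_union, Set.mem_singleton_iff]
  constructor
  · rintro ⟨j, hj, rfl⟩
    rcases Nat.lt_succ_iff_lt_or_eq.mp hj with h | h
    · exact Or.inl ⟨j, h, rfl⟩
    · exact Or.inr (by rw [Fin.ext h])
  · rintro (⟨j, hj, rfl⟩ | rfl)
    · exact ⟨j, by omega, rfl⟩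
    · exact ⟨i, by omega, rfl⟩

theorem Jp_full {N : ℕ} (f : Fin N → A) : Jp f N = Ideal.span (Set.range f) := by
  rw [Jp, ← Set.image_univ]
  congr 2
  ext j; simp

theorem Jp_stab {N : ℕ} (f : Fin N → A) (d : Fin N → ℤ) (hf : ∀ l, G.p (d l) (f l) = f l) (i : ℕ) :
    GStab G.self (Jp f i) := by
  apply GStab.span
  rintro _ ⟨l, _, rfl⟩
  exact ⟨d l, hf l⟩

theorem regseq_reg [Nontrivial A] {N : ℕ} (f : Fin N → A) (d : Fin N → ℤ)
    (hf : ∀ l, G.p (d l) (f l) = f l) (hd : ∀ l, 1 ≤ d l)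
    (hreg : ∀ i : Fin N, ∀ a, a * f i ∈ Jp f i → a ∈ Jp f i) :
    RQ G (∑ l, (d l - 1)) (Jp f N) ∧ ¬ RQ G (∑ l, (d l - 1) - 1) (Jp f N) := by
  have key : ∀ i : ℕ, i ≤ N → RQ G (∑ l with l.val < i, (d l - 1)) (Jp f i) ∧
      ¬ RQ G (∑ l with l.val < i, (d l - 1) - 1) (Jp f i) := by
    intro i
    induction i with
    | zero =>
      intro _
      rw [Jp_zero]
      simpa using ⟨RQ.bot, RQ.bot_not⟩
    | succ i ih =>
      intro hi
      obtain ⟨h1, h2⟩ := ih (by omega)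
      let i' : Fin N := ⟨i, hi⟩
      have hsum : ∑ l with l.val < i + 1, (d l - 1) = ∑ l with l.val < i, (d l - 1) + (d i' - 1) := by
        have : (Finset.univ.filter fun l : Fin N => l.val < i + 1)
            = insert i' (Finset.univ.filter fun l : Fin N => l.val < i) := by
          ext l
          simp only [Finset.mem_filter, Finset.mem_univ, true_and, Finset.mem_insert, Fin.ext_iff, i']
          omega
        rw [this, Finset.sum_insert (by simp [i']), add_comm]
      rw [hsum]
      set r := ∑ l with l.val < i, (d l - 1)
      have hC : ∀ a, a ∈ Jp f i ↔ a * f i' ∈ Jp f i :=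
        fun a => ⟨fun h => Ideal.mul_mem_right _ _ h, hreg i' a⟩
      have hd' := hd i'
      constructor
      · exact cyc2 (hf i') hC (Jp_succ f i') (h1.mono (by linarith)) (h1.mono (by linarith))
      · intro h
        apply h2
        have := cyc3 (t := r + (d i' - 1)) (hf i') hC (Jp_succ f i') (h1.mono (by linarith)) h
        exact this.mono (by linarith)
  have := key N le_rfl
  simpa using this

end Csec

section Hsec
variable {A : Type} [CommRing A] {G : GRing A}

theorem GM.mem_of_p {M : Type} [AddCommGroup M] [Module A M] (gM : GM G M) (W : Submodule A M)
    (x : M) (h : ∀ j, gM.p j x ∈ W) : x ∈ W := by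
  obtain ⟨s, hs⟩ := gM.sum x
  rw [← hs]
  exact sum_mem fun j _ => h j

theorem RegP.nzd {x : A} (hx1 : G.p 1 x = x) (hxA : ∀ a : A, x * a = 0 → a = 0) (b : ℤ) (n : ℕ) :
    ∀ (t : ℤ) {N Q : Type} [AddCommGroup N] [Module A N] [AddCommGroup Q] [Module A Q]
    (gN : GM G N) (gQ : GM G Q) (g : N →ₗ[A] Q) (_ : GHom gN gQ g) (_ : Function.Surjective g)
    (_ : ∀ y, g y = 0 → ∃ z, y = x • z) (_ : ∀ z, g (x • z) = 0)
    (_ : ∀ y : N, x • y = 0 → y = 0) (_ : ∀ j y, j < b → gN.p j y = 0)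
    (_ : RegP G n t Q gQ), RegP G n t N gN := by
  induction n with
  | zero => intros; trivial
  | succ n ih =>
    intro t N Q _ _ _ _ gN gQ g hg hsur hker hker' hnz hb h
    have hQ := h
    obtain ⟨κ, τ, φQ, hφQ, hτ, hsQ, -⟩ := h
    let ι : Type := {q : ℤ × N // b ≤ q.1 ∧ q.1 ≤ t ∧ gN.p q.1 q.2 = q.2}
    let σ : ι → ℤ := fun q => q.1.1
    let φ : (ι →₀ A) →ₗ[A] N := Finsupp.linearCombination A (fun q : ι => q.1.2)
    have hφ1 : ∀ q : ι, φ (Finsupp.single q 1) = q.1.2 := by intro q; simp [φ]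
    have hφ : GHom (G.free σ) gN φ := GHom.of_gens gN σ φ (fun q => by
      rw [hφ1]; exact q.2.2.2)
    have hW : ∀ j y, j ≤ t → gN.p j y = y → y ∈ LinearMap.range φ := by
      intro j y hj hy
      by_cases hjb : j < b
      · rw [← hy, hb j y hjb]; exact zero_mem _
      · exact ⟨Finsupp.single ⟨(j, y), not_lt.mp hjb, hj, hy⟩ 1, hφ1 _⟩
    obtain ⟨ψ, hψ, hψe⟩ := hg.lift hsur hφQ
    have hψW : ∀ c, ψ c ∈ LinearMap.range φ := by
      intro c
      induction c using Finsupp.induction_linear with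
      | zero => rw [map_zero]; exact zero_mem _
      | add x y hx hy => rw [map_add]; exact add_mem hx hy
      | single k a =>
        have : Finsupp.single k a = a • (Finsupp.single k 1 : κ →₀ A) := by simp
        rw [this, map_smul]
        exact Submodule.smul_mem _ _ (hW (τ k) _ (hτ k) (hψ.gens k))
    have hall : ∀ (i : ℕ) (y : N), gN.p (b - 1 + i) y ∈ LinearMap.range φ := by
      intro i
      induction i with
      | zero => intro y; rw [hb _ _ (by simp)]; exact zero_mem _
      | succ i ihi =>
        intro y
        obtain ⟨c, hc⟩ := hsQ (g y)
        obtain ⟨z, hz⟩ := hker (y - ψ c) (by rw [map_sub, hψe, hc, sub_self])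
        have h1 : y = ψ c + x • z := by rw [← hz]; abel
        have h2 : gN.p (b - 1 + ((i + 1 : ℕ) : ℤ)) (x • z) = x • gN.p (b - 1 + i) z := by
          rw [← gN.smul 1 _ x z hx1]
          congr 2; push_cast; ring
        rw [h1, map_add, h2]
        exact add_mem (hφ.range _ _ (hψW c)) (Submodule.smul_mem _ _ (ihi z))
    have hs : Function.Surjective φ := by
      intro y
      apply gN.mem_of_p (LinearMap.range φ) y
      intro j
      by_cases hjb : j < b
      · rw [hb j y hjb]; exact zero_mem _
      · have := hall (j - b + 1).toNat y
        rwa [show b - 1 + ((j - b + 1).toNat : ℤ) = j by omega] at this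
    refine ⟨ι, σ, φ, hφ, fun q => q.2.2.1, hs, ?_⟩
    -- F / xF
    let m : (ι →₀ A) →ₗ[A] (ι →₀ A) := LinearMap.lsmul A (ι →₀ A) x
    have hm : ∀ y, m y = x • y := fun y => rfl
    let T : Submodule A (ι →₀ A) := LinearMap.range m
    have hmh : GHom ((G.free σ).shift 1) (G.free σ) m := by
      intro j y
      have := (G.free σ).smul 1 (j - 1) x y hx1
      rw [sub_add_cancel] at this
      exact this
    have hT : GStab (G.free σ) T := hmh.range
    have hFt : ∀ n, RegP G n t (ι →₀ A) (G.free σ) := fun n =>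
      RegP.free n t σ (fun q => q.2.2.1)
    have hmi : Function.Injective m := by
      rw [← LinearMap.ker_eq_bot, LinearMap.ker_eq_bot']
      intro y hy
      ext k
      exact hxA _ (DFunLike.congr_fun hy k)
    have hTle : T ≤ LinearMap.ker (g ∘ₗ φ) := by
      rintro _ ⟨y, rfl⟩
      rw [LinearMap.mem_ker, LinearMap.comp_apply, hm, map_smul, hker']
    let gb : ((ι →₀ A) ⧸ T) →ₗ[A] Q := T.liftQ (g ∘ₗ φ) hTle
    have hgb : ∀ y, gb (T.mkQ y) = g (φ y) := fun y => rfl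
    have hgbh : GHom ((G.free σ).quot T hT) gQ gb := by
      intro j y
      obtain ⟨y, rfl⟩ := T.mkQ_surjective y
      rw [GM.quot_p, hgb, hgb, hg, hφ]
    have hgbs : Function.Surjective gb := by
      intro q
      obtain ⟨y, hy⟩ := hsur q
      obtain ⟨z, hz⟩ := hs y
      exact ⟨T.mkQ z, by rw [hgb, hz, hy]⟩
    have hQL : RegP G n (t + 1) (LinearMap.ker gb) (((G.free σ).quot T hT).sub _ hgbh.ker) := by
      refine RegP.kern n (t + 1) _ _ _ (LinearMap.ker gb).subtype gb (fun _ _ => rfl) hgbh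
        (Submodule.subtype_injective _) hgbs ?_ ?_ ?_
      · exact LinearMap.exact_subtype_ker_map gb
      · have h3 := RegP.coker (n - 1) t ((G.free σ).shift 1) (G.free σ) ((G.free σ).quot T hT)
          m T.mkQ hmh (fun _ _ => rfl) hmi T.mkQ_surjective
          (fun y => Submodule.Quotient.mk_eq_zero T) (hFt _)
          (RegLe.shift (gM := G.free σ) hFt 1 _)
        cases n with
        | zero => trivial
        | succ n => exact RegP.mono _ _ _ (by linarith) _ h3
      · rw [add_sub_cancel_right]; exact hQ
    let gL : LinearMap.ker φ →ₗ[A] LinearMap.ker gb :=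
      (T.mkQ ∘ₗ (LinearMap.ker φ).subtype).codRestrict _ (by
        rintro ⟨y, hy⟩
        rw [LinearMap.mem_ker] at hy ⊢
        change gb (T.mkQ y) = 0
        rw [hgb, hy, map_zero])
    refine ih (t + 1) _ _ gL ?_ ?_ ?_ ?_ ?_ ?_ hQL
    · intro j y; rfl
    · rintro ⟨y, hy⟩
      obtain ⟨y, rfl⟩ := T.mkQ_surjective y
      obtain ⟨z, hz⟩ := hker (φ y) hy
      obtain ⟨w, hw⟩ := hs z
      refine ⟨⟨y - x • w, ?_⟩, Subtype.ext ?_⟩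
      · rw [LinearMap.mem_ker, map_sub, map_smul, hw, hz, sub_self]
      · change T.mkQ (y - x • w) = T.mkQ y
        rw [map_sub, sub_eq_self]
        exact (Submodule.Quotient.mk_eq_zero T).mpr ⟨w, rfl⟩
    · rintro ⟨y, hy⟩ h0
      have h1 : T.mkQ y = 0 := congrArg Subtype.val h0
      obtain ⟨w, hw⟩ := (Submodule.Quotient.mk_eq_zero T).mp h1
      refine ⟨⟨w, ?_⟩, Subtype.ext hw.symm⟩
      rw [LinearMap.mem_ker] at hy ⊢
      apply hnz
      rw [← map_smul, ← hm, hw, hy]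
    · rintro ⟨z, hz⟩
      apply Subtype.ext
      change T.mkQ (x • z) = 0
      exact (Submodule.Quotient.mk_eq_zero T).mpr ⟨z, rfl⟩
    · rintro ⟨y, hy⟩ h0
      apply Subtype.ext
      apply hmi
      rw [ZeroMemClass.coe_zero, map_zero]
      exact congrArg Subtype.val h0
    · rintro j ⟨y, hy⟩ hj
      apply Subtype.ext
      change (G.free σ).p j y = 0
      ext k
      rw [G.free_p, G.neg _ _ (by have : b ≤ σ k := k.2.1; linarith)]
      rfl

theorem RQ.nzd {x : A} (hx1 : G.p 1 x = x) (hxA : ∀ a : A, x * a = 0 → a = 0) {I : Ideal A}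
    (hI : GStab G.self I) (hnz : ∀ a, a * x ∈ I → a ∈ I) {t : ℤ}
    (h : RQ G t (I ⊔ Ideal.span {x} : Ideal A)) : RQ G t I := by
  obtain ⟨hI', h⟩ := h
  have hle : (I : Submodule A A) ≤
      Submodule.comap LinearMap.id ((I ⊔ Ideal.span {x} : Ideal A) : Submodule A A) := by
    intro x hx; exact Submodule.mem_sup_left hx
  refine ⟨hI, fun n => RegP.nzd hx1 hxA 0 n t _ _ (Submodule.mapQ _ _ LinearMap.id hle)
    ?_ ?_ ?_ ?_ ?_ ?_ (h n)⟩
  · intro j y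
    obtain ⟨y, rfl⟩ := Submodule.mkQ_surjective _ y
    rfl
  · intro y
    obtain ⟨y, rfl⟩ := Submodule.mkQ_surjective _ y
    exact ⟨Submodule.mkQ _ y, rfl⟩
  · intro y hy
    obtain ⟨y, rfl⟩ := Submodule.mkQ_surjective _ y
    have h1 : y ∈ I ⊔ Ideal.span {x} := (Submodule.Quotient.mk_eq_zero _).mp hy
    obtain ⟨a, ha, b, hb, rfl⟩ := Submodule.mem_sup.mp h1
    obtain ⟨c, rfl⟩ := Ideal.mem_span_singleton'.mp hb
    refine ⟨Submodule.mkQ _ c, ?_⟩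
    rw [← map_smul, map_add, Submodule.mkQ_apply I a, (Submodule.Quotient.mk_eq_zero _).mpr ha,
      zero_add, smul_eq_mul, mul_comm]
  · intro z
    obtain ⟨z, rfl⟩ := Submodule.mkQ_surjective _ z
    apply (Submodule.Quotient.mk_eq_zero _).mpr
    change x * z ∈ _
    exact Submodule.mem_sup_right (Ideal.mul_mem_right _ _ (Ideal.mem_span_singleton_self x))
  · intro z hz
    obtain ⟨z, rfl⟩ := Submodule.mkQ_surjective _ z
    have h1 : x * z ∈ I := (Submodule.Quotient.mk_eq_zero _).mp hz
    exact (Submodule.Quotient.mk_eq_zero _).mpr (hnz z (by rwa [mul_comm]))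
  · intro j y hj
    obtain ⟨y, rfl⟩ := Submodule.mkQ_surjective _ y
    change Submodule.mkQ _ (G.p j y) = 0
    rw [G.neg j y hj, map_zero]

theorem hilbert_bound [IsNoetherianRing A] (X : Set A)
    (hX : ∀ x ∈ X, G.p 1 x = x ∧ ∀ a : A, x * a = 0 → a = 0)
    (base : ∀ I : Ideal A, GStab G.self I → X ⊆ I → ∃ t, RQ G t I) :
    ∀ I : Ideal A, GStab G.self I → ∃ t, RQ G t I := by
  intro I
  induction I using WellFoundedGT.induction with
  | ind I ih =>
    intro hI
    by_cases hXI : X ⊆ I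
    · exact base I hI hXI
    obtain ⟨x, hx, hxI⟩ := Set.not_subset.mp hXI
    obtain ⟨hx1, hxA⟩ := hX x hx
    have hlt : I < I ⊔ Ideal.span {x} := by
      refine lt_of_le_of_ne le_sup_left fun h => hxI ?_
      rw [h]; exact Submodule.mem_sup_right (Ideal.mem_span_singleton_self x)
    have hst : GStab G.self (I ⊔ Ideal.span {x} : Ideal A) :=
      hI.sup (GStab.span (by rintro y rfl; exact ⟨1, hx1⟩))
    obtain ⟨t, ht⟩ := ih _ hlt hst
    by_cases hnz : ∀ a, a * x ∈ I → a ∈ I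
    · exact ⟨t, RQ.nzd hx1 hxA hI hnz ht⟩
    · push Not at hnz
      obtain ⟨a, ha, haI⟩ := hnz
      let C : Ideal A := Submodule.comap (LinearMap.mulRight A x) I
      have hC : ∀ a, a ∈ C ↔ a * x ∈ I := fun a => Iff.rfl
      have hltC : I < C := by
        refine lt_of_le_of_ne (fun y hy => (hC y).mpr (Ideal.mul_mem_right _ _ hy)) fun h => haI ?_
        rw [h]; exact ha
      obtain ⟨hCs, -⟩ := cyc_data hx1 hC rfl hI
      obtain ⟨t', ht'⟩ := ih C hltC hCs
      refine ⟨max t (t' + 1), cyc1 hx1 hC rfl hI (ht'.mono ?_) (ht.mono (le_max_left _ _))⟩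
      have := le_max_right t (t' + 1)
      linarith

end Hsec

section Rsec
variable {A : Type} [CommRing A] {G : GRing A}

theorem mem_smul_top_iff {ι : Type} (𝔪 : Ideal A) (x : ι →₀ A) :
    x ∈ 𝔪 • (⊤ : Submodule A (ι →₀ A)) ↔ ∀ k, x k ∈ 𝔪 := by
  constructor
  · intro h k
    refine Submodule.smul_induction_on h ?_ ?_
    · intro a ha y _
      rw [Finsupp.smul_apply, smul_eq_mul]
      exact Ideal.mul_mem_right _ _ ha
    · intro y z hy hz
      rw [Finsupp.add_apply]
      exact add_mem hy hz
  · intro h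
    rw [← Finsupp.sum_single x]
    refine sum_mem fun k _ => ?_
    have : Finsupp.single k (x k) = x k • (Finsupp.single k 1 : ι →₀ A) := by simp
    rw [this]
    exact Submodule.smul_mem_smul (h k) Submodule.mem_top

theorem gens_le {𝔪 : Ideal A} (hm : ∀ a, G.p 0 a = 0 → a ∈ 𝔪) (h1 : (1 : A) ∉ 𝔪)
    {M : Type} [AddCommGroup M] [Module A M] {gM : GM G M} {ι : Type} {σ : ι → ℤ}
    {φ : (ι →₀ A) →ₗ[A] M} (hφ : GHom (G.free σ) gM φ) (hs : Function.Surjective φ)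
    (hmin : ∀ x, φ x = 0 → ∀ k, x k ∈ 𝔪) {t : ℤ} (h : RegP G 1 t M gM) (k : ι) : σ k ≤ t := by
  by_contra hk
  push Not at hk
  obtain ⟨κ, τ, ψ, hψ, hτ, hsψ, -⟩ := h
  obtain ⟨y, hy⟩ := hsψ (φ (Finsupp.single k 1))
  have h2 : ψ ((G.free τ).p (σ k) y) = φ (Finsupp.single k 1) := by
    rw [← hψ, hy, hφ.gens]
  have h3 : (G.free τ).p (σ k) y ∈ 𝔪 • (⊤ : Submodule A (κ →₀ A)) := by
    rw [mem_smul_top_iff]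
    intro l
    apply hm
    rw [G.free_p, G.idem, if_neg (by linarith [hτ l])]
  have h4 : φ (Finsupp.single k 1) ∈ 𝔪 • (⊤ : Submodule A M) := by
    rw [← h2]
    have := Submodule.mem_map_of_mem (f := ψ) h3
    rw [Submodule.map_smul''] at this
    exact Submodule.smul_mono le_rfl le_top this
  have h5 : (⊤ : Submodule A M) = Submodule.map φ ⊤ := by
    rw [Submodule.map_top, LinearMap.range_eq_top.mpr hs]
  rw [h5, ← Submodule.map_smul''] at h4
  obtain ⟨z, hz, hze⟩ := h4
  have h6 := hmin (Finsupp.single k 1 - z) (by rw [map_sub, hze, sub_self]) k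
  have h7 := (mem_smul_top_iff 𝔪 z).mp hz k
  have h8 := add_mem h6 h7
  rw [Finsupp.sub_apply, sub_add_cancel, Finsupp.single_eq_same] at h8
  exact h1 h8

section
variable {M : Type} [AddCommGroup M] [Module A M] {gM : GM G M} {ι : ℕ → Type}
    {σ : ∀ i, ι i → ℤ} {d : ∀ i, (ι (i + 1) →₀ A) →ₗ[A] (ι i →₀ A)} {ε : (ι 0 →₀ A) →ₗ[A] M}

theorem res_regLe (hd : ∀ i, GHom (G.free (σ (i + 1))) (G.free (σ i)) (d i))
    (hε : GHom (G.free (σ 0)) gM ε) (exd : ∀ i, Function.Exact (d (i + 1)) (d i))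
    (exε : Function.Exact (d 0) ε) (hs : Function.Surjective ε) {t : ℤ}
    (h : ∀ i k, σ i k - i ≤ t) : RegLe t gM := by
  have key : ∀ (n i : ℕ), RegP G n (t + i + 1) (LinearMap.range (d i))
      ((G.free (σ i)).sub _ (hd i).range) := by
    intro n
    induction n with
    | zero => intros; trivial
    | succ n ih =>
      intro i
      have hφ : GHom (G.free (σ (i + 1))) ((G.free (σ i)).sub _ (hd i).range)
          (LinearMap.rangeRestrict (d i)) := fun j x => Subtype.ext (hd i j x)
      refine ⟨ι (i + 1), σ (i + 1), LinearMap.rangeRestrict (d i), hφ, ?_,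
        LinearMap.surjective_rangeRestrict _, ?_⟩
      · intro k
        have := h (i + 1) k
        push_cast at this
        linarith
      · have hk : LinearMap.range (d (i + 1)) = LinearMap.ker (LinearMap.rangeRestrict (d i)) := by
          rw [LinearMap.ker_rangeRestrict]
          exact (LinearMap.exact_iff.mp (exd i)).symm
        have := RegP.shift n _ 0 _ ((G.free (σ (i + 1))).sub _ hφ.ker) (LinearEquiv.ofEq _ _ hk)
          (by
            intro j x
            rw [sub_zero]
            exact Subtype.ext rfl) (ih (i + 1))
        refine RegP.mono n _ _ ?_ _ this
        push_cast
        linarith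
  intro n
  cases n with
  | zero => trivial
  | succ n =>
    refine ⟨ι 0, σ 0, ε, hε, ?_, hs, ?_⟩
    · intro k
      simpa using h 0 k
    · have hk : LinearMap.range (d 0) = LinearMap.ker ε := (LinearMap.exact_iff.mp exε).symm
      have := RegP.shift n _ 0 _ ((G.free (σ 0)).sub _ hε.ker) (LinearEquiv.ofEq _ _ hk)
        (by
          intro j x
          rw [sub_zero]
          exact Subtype.ext rfl) (key n 0)
      exact RegP.mono n _ _ (by simp) _ this

theorem regLe_res {𝔪 : Ideal A} (hm : ∀ a, G.p 0 a = 0 → a ∈ 𝔪) (h1 : (1 : A) ∉ 𝔪)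
    (hd : ∀ i, GHom (G.free (σ (i + 1))) (G.free (σ i)) (d i))
    (hε : GHom (G.free (σ 0)) gM ε) (exd : ∀ i, Function.Exact (d (i + 1)) (d i))
    (exε : Function.Exact (d 0) ε) (hs : Function.Surjective ε)
    (hmin : ∀ i x k, d i x k ∈ 𝔪) {t : ℤ}
    (h : RegLe t gM) (i : ℕ) (k : ι i) : σ i k - i ≤ t := by
  have h0 : ∀ k, σ 0 k ≤ t := by
    refine gens_le hm h1 hε hs ?_ (h 1)
    intro x hx
    obtain ⟨y, rfl⟩ := (exε x).mp hx
    exact hmin 0 y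
  have key : ∀ i, (∀ k, σ i k ≤ t + i) ∧
      RegLe (t + i + 1) ((G.free (σ i)).sub _ (hd i).range) := by
    intro i
    induction i with
    | zero =>
      refine ⟨by simpa using h0, fun n => ?_⟩
      refine RegP.kern n _ _ _ gM (LinearMap.range (d 0)).subtype ε (fun _ _ => rfl) hε
        (Submodule.subtype_injective _) hs ?_
        (RegP.free n _ _ (fun k => by have := h0 k; push_cast; linarith)) ?_
      · rw [LinearMap.exact_iff, Submodule.range_subtype]
        exact LinearMap.exact_iff.mp exε
      · have := h (n + 1)
        simpa using this
    | succ i ih =>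
      obtain ⟨_, ih2⟩ := ih
      have hφ : GHom (G.free (σ (i + 1))) ((G.free (σ i)).sub _ (hd i).range)
          (LinearMap.rangeRestrict (d i)) := fun j x => Subtype.ext (hd i j x)
      have hk : ∀ k, σ (i + 1) k ≤ t + i + 1 := by
        refine gens_le hm h1 hφ (LinearMap.surjective_rangeRestrict _) ?_ (ih2 1)
        intro x hx
        obtain ⟨y, rfl⟩ := (exd i x).mp (congrArg Subtype.val hx)
        exact hmin (i + 1) y
      refine ⟨fun k => by have := hk k; push_cast; linarith, fun n => ?_⟩
      refine RegP.kern n _ ((G.free (σ (i + 1))).sub _ (hd (i + 1)).range) (G.free (σ (i + 1)))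
        ((G.free (σ i)).sub _ (hd i).range) (LinearMap.range (d (i + 1))).subtype
        (LinearMap.rangeRestrict (d i)) (fun _ _ => rfl) hφ
        (Submodule.subtype_injective _) (LinearMap.surjective_rangeRestrict _) ?_
        (RegP.free n _ _ (fun k => by have := hk k; push_cast; linarith)) ?_
      · rw [LinearMap.exact_iff, Submodule.range_subtype, LinearMap.ker_rangeRestrict]
        exact LinearMap.exact_iff.mp (exd i)
      · have := ih2 (n + 1)
        refine RegP.mono _ _ _ ?_ _ this
        push_cast; linarith
  have := (key i).1 k
  linarith

end

theorem min_gens [IsNoetherianRing A] {𝔪 : Ideal A} (hm : ∀ a, G.p 0 a = 0 → a ∈ 𝔪)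
    (hu : ∀ a, G.p 0 a ≠ 0 → IsUnit (G.p 0 a)) {ι : Type} [Finite ι] (σ : ι → ℤ)
    (Z : Submodule A (ι →₀ A)) (hZ : GStab (G.free σ) Z) :
    ∃ (r : ℕ) (τ : Fin r → ℤ) (D : (Fin r →₀ A) →ₗ[A] (ι →₀ A)),
      GHom (G.free τ) (G.free σ) D ∧ LinearMap.range D = Z ∧ ∀ c, D c = 0 → ∀ k, c k ∈ 𝔪 := by
  classical
  let Pr : ℕ → Prop := fun r => ∃ (τ : Fin r → ℤ) (z : Fin r → (ι →₀ A)),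
    (∀ k, (G.free σ).p (τ k) (z k) = z k) ∧ Submodule.span A (Set.range z) = Z
  have hex : ∃ r, Pr r := by
    obtain ⟨S, hS⟩ := IsNoetherian.noetherian Z
    choose s hs using fun x => (G.free σ).sum x
    let T : Finset (ℤ × (ι →₀ A)) := S.biUnion fun x => (s x).image fun j => (j, (G.free σ).p j x)
    let eT := T.equivFin
    refine ⟨T.card, fun k => (eT.symm k).1.1, fun k => (eT.symm k).1.2, ?_, ?_⟩
    · intro k
      have hmem := (eT.symm k).2
      simp only [T, Finset.mem_biUnion, Finset.mem_image] at hmem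
      obtain ⟨x, _, j, _, hj⟩ := hmem
      change (G.free σ).p (eT.symm k).1.1 (eT.symm k).1.2 = (eT.symm k).1.2
      rw [← hj]
      simp only
      rw [(G.free σ).idem, if_pos rfl]
    · apply le_antisymm
      · rw [Submodule.span_le]
        rintro _ ⟨k, rfl⟩
        have hmem := (eT.symm k).2
        simp only [T, Finset.mem_biUnion, Finset.mem_image] at hmem
        obtain ⟨x, hx, j, _, hj⟩ := hmem
        change (eT.symm k).1.2 ∈ Z
        rw [← hj]
        apply hZ
        rw [← hS]
        exact Submodule.subset_span hx
      · rw [← hS, Submodule.span_le]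
        intro x hx
        rw [SetLike.mem_coe, ← hs x]
        refine sum_mem fun j hj => Submodule.subset_span ?_
        have hmem : (j, (G.free σ).p j x) ∈ T := by
          simp only [T, Finset.mem_biUnion, Finset.mem_image]
          exact ⟨x, hx, j, hj, rfl⟩
        exact ⟨eT ⟨_, hmem⟩, by simp⟩
  obtain ⟨τ, z, hz, hsp⟩ := Nat.find_spec hex
  have hmin := fun r hr => Nat.find_min (m := r) hex hr
  generalize Nat.find hex = r at τ z hz hsp hmin
  let D : (Fin r →₀ A) →ₗ[A] (ι →₀ A) := Finsupp.linearCombination A z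
  have hD1 : ∀ k, D (Finsupp.single k 1) = z k := by intro k; simp [D]
  have hDh : GHom (G.free τ) (G.free σ) D := GHom.of_gens _ τ D (fun k => by rw [hD1, hz])
  refine ⟨r, τ, D, hDh, ?_, ?_⟩
  · rw [← hsp]; exact Finsupp.range_linearCombination A
  · intro c hc k
    by_contra hck
    have h0 : G.p 0 (c k) ≠ 0 := fun h => hck (hm _ h)
    obtain ⟨u, hu'⟩ := hu _ h0
    set c' := (G.free τ).p (τ k) c with hc'
    have hc'0 : D c' = 0 := by rw [hc', ← hDh, hc, map_zero]
    have hck' : c' k = u := by rw [hc', G.free_p, sub_self, hu']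
    cases r with
    | zero => exact k.elim0
    | succ r =>
      refine hmin r (Nat.lt_succ_self r) ⟨fun l => τ (k.succAbove l), fun l => z (k.succAbove l),
        fun l => hz _, ?_⟩
      rw [← hsp]
      apply le_antisymm
      · apply Submodule.span_mono
        rintro _ ⟨l, rfl⟩
        exact ⟨_, rfl⟩
      · rw [Submodule.span_le]
        rintro _ ⟨l, rfl⟩
        rcases Fin.eq_self_or_eq_succAbove k l with h | ⟨l', h⟩
        · rw [h]
          have h2 : D c' = ∑ l, c' l • z l := by
            simp only [D]
            rw [Finsupp.linearCombination_apply, Finsupp.sum_fintype _ _ (by simp)]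
          rw [hc'0, Fin.sum_univ_succAbove _ k, hck'] at h2
          have h3 : z k = -((↑u⁻¹ : A) • ∑ l, c' (k.succAbove l) • z (k.succAbove l)) := by
            have h4 := eq_neg_of_add_eq_zero_left h2.symm
            rw [← smul_neg, ← h4, smul_smul, Units.inv_mul, one_smul]
          rw [h3]
          refine neg_mem (Submodule.smul_mem _ _ (sum_mem fun l _ => Submodule.smul_mem _ _ ?_))
          exact Submodule.subset_span ⟨l, rfl⟩
        · rw [h]
          exact Submodule.subset_span ⟨l', rfl⟩

structure RState (G : GRing A) where
  ι : Type
  fin : Finite ι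
  σ : ι → ℤ
  Z : Submodule A (ι →₀ A)
  stab : GStab (G.free σ) Z

theorem exists_res [IsNoetherianRing A] {𝔪 : Ideal A} (hm : ∀ a, G.p 0 a = 0 → a ∈ 𝔪)
    (hu : ∀ a, G.p 0 a ≠ 0 → IsUnit (G.p 0 a)) (I : Ideal A) (hI : GStab G.self I) (hIm : I ≤ 𝔪) :
    ∃ (ι : ℕ → Type) (σ : ∀ i, ι i → ℤ) (d : ∀ i, (ι (i + 1) →₀ A) →ₗ[A] (ι i →₀ A))
      (ε : (ι 0 →₀ A) →ₗ[A] (A ⧸ (I : Submodule A A))), (∀ i, Finite (ι i)) ∧ Nonempty (ι 0) ∧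
      (∀ i, GHom (G.free (σ (i + 1))) (G.free (σ i)) (d i)) ∧
      GHom (G.free (σ 0)) (G.self.quot I hI) ε ∧ (∀ i, Function.Exact (d (i + 1)) (d i)) ∧
      Function.Exact (d 0) ε ∧ Function.Surjective ε ∧ (∀ i x k, d i x k ∈ 𝔪) := by
  have step : ∀ s : RState G, ∃ (s' : RState G) (D : (s'.ι →₀ A) →ₗ[A] (s.ι →₀ A)),
      GHom (G.free s'.σ) (G.free s.σ) D ∧ LinearMap.range D = s.Z ∧ s'.Z = LinearMap.ker D ∧
      ∀ x ∈ s'.Z, ∀ k, x k ∈ 𝔪 := by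
    intro s
    have := s.fin
    obtain ⟨r, τ, D, hD, hr, hk⟩ := min_gens hm hu s.σ s.Z s.stab
    exact ⟨⟨Fin r, inferInstance, τ, LinearMap.ker D, hD.ker⟩, D, hD, hr, rfl, hk⟩
  choose nx D hD hr hZ hmin using step
  let ε : (Unit →₀ A) →ₗ[A] (A ⧸ (I : Submodule A A)) :=
    (Submodule.mkQ (I : Submodule A A)) ∘ₗ Finsupp.lapply ()
  have hεa : ∀ x, ε x = Submodule.mkQ (I : Submodule A A) (x ()) := fun x => rfl
  have hε : GHom (G.free (fun _ : Unit => 0)) (G.self.quot I hI) ε := by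
    intro j x
    rw [hεa, hεa, GM.quot_p, G.free_p, sub_zero]
    rfl
  let s0 : RState G := ⟨Unit, inferInstance, fun _ => 0, LinearMap.ker ε, hε.ker⟩
  let sq : ℕ → RState G := fun i => Nat.rec s0 (fun _ s => nx s) i
  have hZm : ∀ i, ∀ x ∈ (sq i).Z, ∀ k, x k ∈ 𝔪 := by
    intro i
    cases i with
    | zero =>
      intro x hx k
      exact hIm ((Submodule.Quotient.mk_eq_zero _).mp hx)
    | succ i => exact hmin (sq i)
  refine ⟨fun i => (sq i).ι, fun i => (sq i).σ, fun i => D (sq i), ε, fun i => (sq i).fin,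
    ⟨()⟩, fun i => hD (sq i), hε, ?_, ?_, ?_, ?_⟩
  · intro i
    rw [LinearMap.exact_iff]
    exact (hZ (sq i)).symm.trans (hr (sq (i + 1))).symm
  · rw [LinearMap.exact_iff]
    exact (hr s0).symm
  · intro y
    obtain ⟨y, rfl⟩ := Submodule.mkQ_surjective _ y
    exact ⟨Finsupp.single () y, by rw [hεa, Finsupp.single_eq_same]⟩
  · intro i x k
    refine hZm i _ ?_ k
    rw [← hr]
    exact ⟨x, rfl⟩

end Rsec

section Dsec
variable {A : Type} [CommRing A] {G : GRing A}

theorem Jp_mono {N : ℕ} (f : Fin N → A) (i : ℕ) : Jp f i ≤ Jp f (i + 1) := by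
  apply Ideal.span_mono
  rintro _ ⟨j, hj, rfl⟩
  exact ⟨j, Nat.lt_succ_of_lt hj, rfl⟩

theorem Jp_le {N : ℕ} (f : Fin N → A) (i : ℕ) : Jp f i ≤ Jp f N := by
  apply Ideal.span_mono
  rintro _ ⟨j, hj, rfl⟩
  exact ⟨j, j.2, rfl⟩

theorem mem_Jp_full {N : ℕ} (f : Fin N → A) (i : Fin N) : f i ∈ Jp f N :=
  Ideal.subset_span ⟨i, i.2, rfl⟩

theorem Jp_succ_mul {N : ℕ} (f : Fin N → A) (i : Fin N) (K : Ideal A) {u : A}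
    (hu : u ∈ Jp f (i + 1) * K) : ∃ v ∈ Jp f i * K, ∃ w ∈ K, u = v + f i * w := by
  rw [Jp_succ, Ideal.sup_mul] at hu
  obtain ⟨v, hv, x, hx, rfl⟩ := Submodule.mem_sup.mp hu
  obtain ⟨w, hw, rfl⟩ := Ideal.mem_span_singleton_mul.mp hx
  exact ⟨v, hv, w, hw, rfl⟩

theorem dseq_inter {N : ℕ} (f : Fin N → A)
    (hd : ∀ i : Fin N, ∀ a, a * f i ∈ Jp f i → a ∈ Jp f N → a ∈ Jp f i) (s : ℕ) :
    ∀ k i, i + k = N → ∀ u ∈ Jp f i, u ∈ Jp f N ^ (s + 1) → u ∈ Jp f i * Jp f N ^ s := by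
  induction s with
  | zero =>
    intro k i _ u hu _
    rwa [pow_zero, Ideal.one_eq_top, Ideal.mul_top]
  | succ s ihs =>
    intro k
    induction k with
    | zero =>
      intro i hi u _ hu
      obtain rfl : i = N := by omega
      rwa [pow_succ'] at hu
    | succ k ihk =>
      intro i hi u hu hus
      have hiN : i < N := by omega
      have h1 := ihk (i + 1) (by omega) u (Jp_mono f i hu) hus
      obtain ⟨v, hv, w, hw, rfl⟩ := Jp_succ_mul f ⟨i, hiN⟩ _ h1
      have hv' : v ∈ Jp f i := Ideal.mul_le_left hv
      have h2 : w * f ⟨i, hiN⟩ ∈ Jp f i := by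
        have := sub_mem hu hv'
        rwa [add_sub_cancel_left, mul_comm] at this
      have h3 : w ∈ Jp f i := hd ⟨i, hiN⟩ w h2 (Ideal.pow_le_self (Nat.succ_ne_zero s) hw)
      have h4 := ihs (k + 1) i hi w h3 hw
      refine add_mem hv ?_
      rw [pow_succ, ← mul_assoc, mul_comm (f _) w]
      exact Ideal.mul_mem_mul h4 (mem_Jp_full f _)

theorem dseq_colon {N : ℕ} (f : Fin N → A)
    (hd : ∀ i : Fin N, ∀ a, a * f i ∈ Jp f i → a ∈ Jp f N → a ∈ Jp f i) (i : Fin N)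
    (hr : ∀ a, a * f i ∈ Jp f i → a ∈ Jp f i) (s : ℕ) (a : A) :
    a ∈ Jp f i ⊔ Jp f N ^ s ↔ a * f i ∈ Jp f i ⊔ Jp f N ^ (s + 1) := by
  constructor
  · intro h
    obtain ⟨u, hu, v, hv, rfl⟩ := Submodule.mem_sup.mp h
    rw [add_mul]
    refine add_mem (Submodule.mem_sup_left (Ideal.mul_mem_right _ _ hu))
      (Submodule.mem_sup_right ?_)
    rw [pow_succ]
    exact Ideal.mul_mem_mul hv (mem_Jp_full f _)
  · intro h
    obtain ⟨u, hu, v, hv, huv⟩ := Submodule.mem_sup.mp h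
    have h1 : v ∈ Jp f (i + 1) := by
      have e : v = a * f i - u := by rw [← huv]; ring
      rw [e]
      exact sub_mem (Ideal.mul_mem_left _ _ (Ideal.subset_span ⟨i, Nat.lt_succ_self _, rfl⟩))
        (Jp_mono f _ hu)
    have h2 := dseq_inter f hd s (N - (i + 1)) (i + 1) (by have := i.2; omega) v h1 hv
    obtain ⟨v', hv', w, hw, e⟩ := Jp_succ_mul f i _ h2
    have h3 : (a - w) * f i ∈ Jp f i := by
      have e2 : (a - w) * f i = u + v' := by
        rw [sub_mul, ← huv, e]; ring
      rw [e2]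
      exact add_mem hu (Ideal.mul_le_left hv')
    have := add_mem (Submodule.mem_sup_left (T := Jp f N ^ s) (hr _ h3))
      (Submodule.mem_sup_right (S := Jp f i) hw)
    rwa [sub_add_cancel] at this

theorem sup_span_pow (J : Ideal A) (g : A) (s : ℕ) :
    J ⊔ (J ⊔ Ideal.span {g}) ^ s = J ⊔ Ideal.span {g ^ s} := by
  apply le_antisymm
  · refine sup_le le_sup_left ?_
    induction s with
    | zero => simp
    | succ s ih =>
      rw [pow_succ]
      refine le_trans (Ideal.mul_mono_left ih) ?_
      rw [Ideal.sup_mul, Ideal.mul_sup, Ideal.mul_sup, Ideal.span_singleton_mul_span_singleton,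
        ← pow_succ]
      refine sup_le (sup_le ?_ ?_) (sup_le ?_ le_sup_right)
      · exact le_trans Ideal.mul_le_left le_sup_left
      · exact le_trans Ideal.mul_le_left le_sup_left
      · exact le_trans Ideal.mul_le_right le_sup_left
  · refine sup_le le_sup_left ?_
    rw [← Ideal.span_singleton_pow]
    exact (Ideal.pow_right_mono le_sup_right s).trans le_sup_right

theorem G_pow {e : ℤ} {g : A} (hg : G.p e g = g) (s : ℕ) : G.p ((s : ℤ) * e) (g ^ s) = g ^ s := by
  induction s with
  | zero => simpa using G.one
  | succ s ih =>
    have := G.mul e ((s : ℤ) * e) g (g ^ s) hg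
    rw [ih, ← pow_succ'] at this
    rw [← this]
    congr 2
    push_cast; ring

theorem main_reg {n : ℕ} (f : Fin (n + 1) → A) (d : Fin (n + 1) → ℤ)
    (hf : ∀ l, G.p (d l) (f l) = f l) (h1 : 1 ≤ d (Fin.last n)) (hmono : ∀ l, d l ≤ d (Fin.last n))
    (hd : ∀ i : Fin (n + 1), ∀ a, a * f i ∈ Jp f i → a ∈ Jp f (n + 1) → a ∈ Jp f i)
    (hreg : ∀ i : Fin (n + 1), (i : ℕ) < n → ∀ a, a * f i ∈ Jp f i → a ∈ Jp f i)
    (r : ℤ) (hJ : RQ G r (Jp f n)) (hJ' : ¬ RQ G (r - 1) (Jp f n))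
    (hI : RQ G (r - 1) (Jp f (n + 1))) (u : ℕ) (hu : 1 ≤ u) :
    RQ G (r + u * d (Fin.last n) - 1) (Jp f (n + 1) ^ (u + 1)) ∧
    ¬ RQ G (r + u * d (Fin.last n) - 1 - 1) (Jp f (n + 1) ^ (u + 1)) := by
  set D := d (Fin.last n) with hD
  set g := f (Fin.last n) with hgdef
  have hg : G.p D g = g := hf _
  set I := Jp f (n + 1) with hIdef
  have hIJ : I = Jp f n ⊔ Ideal.span {g} := Jp_succ f (Fin.last n)
  have hIst : GStab G.self I := Jp_stab f d hf _
  let C : Ideal A := Submodule.comap (LinearMap.mulRight A g) (Jp f n)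
  have hC1 : ∀ a, a ∈ C ↔ a * g ∈ Jp f n := fun a => Iff.rfl
  have hCs : ∀ s : ℕ, ∀ a, a ∈ C ↔ a * g ^ (s + 1) ∈ Jp f n := by
    intro s a
    rw [hC1]
    induction s with
    | zero => simp
    | succ s ih =>
      rw [ih]
      constructor
      · intro h
        rw [pow_succ, ← mul_assoc]
        exact Ideal.mul_mem_right _ _ h
      · intro h
        rw [pow_succ, ← mul_assoc] at h
        refine hd (Fin.last n) _ h ?_
        rw [pow_succ, ← mul_assoc]
        exact Ideal.mul_mem_left _ _ (mem_Jp_full f _)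
  have hCr : RQ G (r - D) C := cyc3 hg hC1 hIJ hJ hI
  have hCr' : ¬ RQ G (r - 1 - D) C := fun h => hJ' (cyc1 hg hC1 hIJ hJ.1 h hI)
  have htop : ∀ s : ℕ, Jp f n ⊔ I ^ (s + 1) = Jp f n ⊔ Ideal.span {g ^ (s + 1)} := by
    intro s
    rw [hIJ]
    exact sup_span_pow _ _ _
  have hst : ∀ (i s : ℕ), GStab G.self (Jp f i ⊔ I ^ s : Ideal A) :=
    fun i s => (Jp_stab f d hf i).sup (hIst.pow s)
  have hsucc : ∀ (i : Fin (n + 1)) (s : ℕ), Jp f (i + 1) ⊔ I ^ s = (Jp f i ⊔ I ^ s) ⊔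
      Ideal.span {f i} := by
    intro i s
    rw [Jp_succ, sup_right_comm]
  have up : ∀ (v k i : ℕ), i + k = n → RQ G (r + v * D - 1) (Jp f i ⊔ I ^ (v + 1) : Ideal A) := by
    intro v
    induction v with
    | zero =>
      intro k
      induction k with
      | zero =>
        intro i hi
        obtain rfl : i = n := by omega
        have e : Jp f i ⊔ I ^ (0 + 1) = I := by
          rw [zero_add, pow_one, hIJ]; simp
        rw [e]
        simpa using hI
      | succ k ih =>
        intro i hi
        have hin : i < n + 1 := by omega
        refine cyc1 (hf ⟨i, hin⟩) (dseq_colon f hd ⟨i, hin⟩ (hreg ⟨i, hin⟩ (by simp; omega)) 0)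
          (hsucc ⟨i, hin⟩ _) (hst _ _) ?_ (ih (i + 1) (by omega))
        have e : Jp f i ⊔ I ^ 0 = ⊤ := by simp
        rw [e]
        exact RQ.top _
    | succ v ihv =>
      intro k
      induction k with
      | zero =>
        intro i hi
        obtain rfl : i = n := by omega
        rw [htop]
        refine cyc2 (G_pow hg (v + 1 + 1)) (hCs (v + 1)) rfl (hJ.mono ?_) (hCr.mono (le_of_eq ?_))
        · push_cast
          nlinarith [mul_nonneg (Int.natCast_nonneg v) (by linarith : (0:ℤ) ≤ D)]
        · push_cast; ring
      | succ k ih =>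
        intro i hi
        have hin : i < n + 1 := by omega
        refine cyc1 (hf ⟨i, hin⟩)
          (dseq_colon f hd ⟨i, hin⟩ (hreg ⟨i, hin⟩ (by simp; omega)) (v + 1))
          (hsucc ⟨i, hin⟩ _) (hst _ _) ((ihv (k + 1) i hi).mono ?_) (ih (i + 1) (by omega))
        have := hmono ⟨i, hin⟩
        push_cast; linarith
  have low : ∀ (k i : ℕ), i + k = n →
      ¬ RQ G (r + u * D - 1 - 1) (Jp f i ⊔ I ^ (u + 1) : Ideal A) := by
    intro k
    obtain ⟨v, rfl⟩ : ∃ v, u = v + 1 := ⟨u - 1, by omega⟩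
    induction k with
    | zero =>
      intro i hi h
      obtain rfl : i = n := by omega
      rw [htop] at h
      apply hCr'
      refine (cyc3 (G_pow hg (v + 1 + 1)) (hCs (v + 1)) rfl (hJ.mono ?_) h).mono (le_of_eq ?_)
      · push_cast
        nlinarith [mul_nonneg (Int.natCast_nonneg v) (by linarith : (0:ℤ) ≤ D)]
      · push_cast; ring
    | succ k ih =>
      intro i hi h
      have hin : i < n + 1 := by omega
      refine ih (i + 1) (by omega) ?_
      refine cyc2 (hf ⟨i, hin⟩)
          (dseq_colon f hd ⟨i, hin⟩ (hreg ⟨i, hin⟩ (by simp; omega)) (v + 1))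
          (hsucc ⟨i, hin⟩ _) h ((up v (k + 1) i hi).mono ?_)
      have := hmono ⟨i, hin⟩
      push_cast; linarith
  have e0 : Jp f 0 ⊔ I ^ (u + 1) = I ^ (u + 1) := by rw [Jp_zero, bot_sup_eq]
  have a1 := up u n 0 (by omega)
  have a2 := low n 0 (by omega)
  rw [e0] at a1 a2
  exact ⟨a1, a2⟩

end Dsec

section Csec
open MvPolynomial
variable {K : Type} [Field K] {m : ℕ}

noncomputable def mvp (K : Type) [Field K] (m : ℕ) (j : ℤ) : MvPolynomial (Fin m) K →+ MvPolynomial (Fin m) K :=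
  if 0 ≤ j then (homogeneousComponent j.toNat).toAddMonoidHom else 0

theorem mvp_nonneg {j : ℤ} (h : 0 ≤ j) (x : MvPolynomial (Fin m) K) :
    mvp K m j x = homogeneousComponent j.toNat x := by
  rw [mvp, if_pos h]; rfl

theorem mvp_neg {j : ℤ} (h : j < 0) (x : MvPolynomial (Fin m) K) :
    mvp K m j x = 0 := by
  rw [mvp, if_neg (not_le.mpr h)]; rfl

theorem mvp_hom {l : ℕ} {x : MvPolynomial (Fin m) K} (hx : x ∈ homogeneousSubmodule (Fin m) K l)
    (j : ℤ) : mvp K m j x = if j = l then x else 0 := by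
  by_cases h : 0 ≤ j
  · rw [mvp_nonneg h, homogeneousComponent_of_mem hx]
    congr 1
    apply propext
    omega
  · rw [mvp_neg (not_le.mp h), if_neg (by omega)]

theorem mvp_sum (x : MvPolynomial (Fin m) K) :
    ∃ s : Finset ℤ, ∑ j ∈ s, mvp K m j x = x := by
  classical
  refine ⟨(Finset.range (x.totalDegree + 1)).map ⟨fun n : ℕ => (n : ℤ), Nat.cast_injective⟩, ?_⟩
  rw [Finset.sum_map]
  conv_rhs => rw [← sum_homogeneousComponent x]
  refine Finset.sum_congr rfl fun i _ => ?_
  simp [mvp_nonneg]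

theorem mvp_mem (x : MvPolynomial (Fin m) K) (j : ℤ) :
    ∃ l : ℕ, mvp K m j x ∈ homogeneousSubmodule (Fin m) K l ∧ (0 ≤ j → (l : ℤ) = j) := by
  by_cases h : 0 ≤ j
  · refine ⟨j.toNat, ?_, by simp [h]⟩
    rw [mvp_nonneg h]
    exact homogeneousComponent_mem _ _
  · refine ⟨0, ?_, fun h' => absurd h' h⟩
    rw [mvp_neg (not_le.mp h)]
    exact zero_mem _

theorem mvp_eq_iff (x : MvPolynomial (Fin m) K) (j : ℤ) :
    mvp K m j x = x ↔ x ∈ zg (homogeneousSubmodule (Fin m) K) j := by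
  unfold zg
  by_cases h : 0 ≤ j
  · rw [if_pos h]
    constructor
    · intro hx
      rw [← hx, mvp_nonneg h]
      exact homogeneousComponent_mem _ _
    · intro hx
      rw [mvp_hom hx, if_pos (by omega)]
  · rw [if_neg h, mvp_neg (not_le.mp h), Submodule.mem_bot, eq_comm]

theorem mvp_hmul {i : ℕ} {a : MvPolynomial (Fin m) K} (ha : a ∈ homogeneousSubmodule (Fin m) K i)
    (j : ℤ) (x : MvPolynomial (Fin m) K) : mvp K m (j + i) (a * x) = a * mvp K m j x := by
  obtain ⟨s, hs⟩ := mvp_sum x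
  rw [← hs, Finset.mul_sum, map_sum, map_sum, Finset.mul_sum]
  refine Finset.sum_congr rfl fun k _ => ?_
  obtain ⟨l, hl, _⟩ := mvp_mem x k
  rw [mvp_hom hl, mvp_hom (l := i + l) (IsHomogeneous.mul ha hl)]
  by_cases h : j = l
  · rw [if_pos h, if_pos (by push_cast; omega)]
  · rw [if_neg h, if_neg (by push_cast; omega), mul_zero]

noncomputable def mvG (K : Type) [Field K] (m : ℕ) : GRing (MvPolynomial (Fin m) K) where
  p := mvp K m
  idem i j x := by
    by_cases h : 0 ≤ j
    · obtain ⟨l, hl, h2⟩ := mvp_mem x j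
      rw [mvp_hom hl, h2 h]
    · rw [mvp_neg (not_le.mp h)]; simp
  sum := mvp_sum
  neg j x h := mvp_neg h x
  mul i j a x h := by
    by_cases hi : 0 ≤ i
    · have : a ∈ homogeneousSubmodule (Fin m) K i.toNat := by
        rw [← h, mvp_nonneg hi]; exact homogeneousComponent_mem _ _
      have := mvp_hmul this j x
      rwa [Int.toNat_of_nonneg hi] at this
    · rw [mvp_neg (not_le.mp hi)] at h
      rw [← h]; simp
  one := by
    rw [mvp_hom (l := 0) (isHomogeneous_one _ _)]; simp

theorem mvG_p : (mvG K m).p = mvp K m := rfl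

theorem irrel_iff (a : MvPolynomial (Fin m) K) :
    a ∈ irrel (homogeneousSubmodule (Fin m) K) ↔ mvp K m 0 a = 0 := by
  constructor
  · intro h
    have h0 : ∀ x : MvPolynomial (Fin m) K, mvp K m 0 x = C (constantCoeff x) := by
      intro x
      rw [mvp_nonneg le_rfl]
      simp [homogeneousComponent_zero, constantCoeff_eq]
    have hle : irrel (homogeneousSubmodule (Fin m) K) ≤ RingHom.ker (constantCoeff (R := K)) := by
      unfold irrel
      rw [Ideal.span_le]
      intro x hx
      obtain ⟨n, hn⟩ := Set.mem_iUnion.mp hx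
      have h1 := mvp_hom hn 0
      rw [if_neg (by push_cast; omega), h0] at h1
      rw [SetLike.mem_coe, RingHom.mem_ker]
      exact C_injective _ _ (by rw [h1, map_zero])
    rw [h0, (RingHom.mem_ker).mp (hle h), map_zero]
  · intro h
    rw [← sum_homogeneousComponent a]
    refine sum_mem fun i _ => ?_
    cases i with
    | zero =>
      rw [mvp_nonneg le_rfl] at h
      have h' : homogeneousComponent 0 a = 0 := h
      rw [h']; exact zero_mem _
    | succ i =>
      exact Ideal.subset_span (Set.mem_iUnion.mpr ⟨i, homogeneousComponent_mem _ _⟩)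

theorem one_notMem_irrel : (1 : MvPolynomial (Fin m) K) ∉ irrel (homogeneousSubmodule (Fin m) K) := by
  rw [irrel_iff]
  have := (mvG K m).one
  rw [mvG_p] at this
  rw [this]
  exact one_ne_zero

theorem mvp_unit (a : MvPolynomial (Fin m) K) (h : mvp K m 0 a ≠ 0) : IsUnit (mvp K m 0 a) := by
  have h0 : mvp K m 0 a = C (coeff 0 a) := by
    rw [mvp_nonneg le_rfl]
    simp [homogeneousComponent_zero]
  rw [h0] at h ⊢
  exact IsUnit.map _ (IsUnit.mk0 _ (fun h' => h (by rw [h', map_zero])))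

theorem zero_deg_unit {a : MvPolynomial (Fin m) K} (h : a ∈ homogeneousSubmodule (Fin m) K 0) (h0 : a ≠ 0) :
    IsUnit a := by
  have h1 := mvp_hom h 0
  rw [if_pos (by simp)] at h1
  rw [← h1] at h0 ⊢
  exact mvp_unit _ h0

theorem mem_JpX (i : ℕ) (a : MvPolynomial (Fin m) K) :
    a ∈ Jp (fun v : Fin m => (X v : MvPolynomial (Fin m) K)) i ↔
      ∀ c ∈ a.support, ∃ v : Fin m, v.val < i ∧ c v ≠ 0 := by
  have := mem_ideal_span_X_image (x := a) (s := {j : Fin m | (j : ℕ) < i})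
  exact this

theorem X_reg (i : Fin m) (a : MvPolynomial (Fin m) K)
    (h : a * X i ∈ Jp (fun v : Fin m => (X v : MvPolynomial (Fin m) K)) i) :
    a ∈ Jp (fun v : Fin m => (X v : MvPolynomial (Fin m) K)) i := by
  rw [mem_JpX] at h ⊢
  intro c hc
  obtain ⟨v, hv, h2⟩ := h (c + Finsupp.single i 1) (by
    rw [mem_support_iff, coeff_mul_X]
    exact mem_support_iff.mp hc)
  refine ⟨v, hv, ?_⟩
  rw [Finsupp.add_apply, Finsupp.single_eq_of_ne (by intro e; rw [e] at hv; omega), add_zero] at h2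
  exact h2

theorem mv_bound (I : Ideal (MvPolynomial (Fin m) K)) (hI : GStab (mvG K m).self I) :
    ∃ t, RQ (mvG K m) t I := by
  refine hilbert_bound (Set.range X) ?_ ?_ I hI
  · rintro _ ⟨v, rfl⟩
    refine ⟨?_, fun a ha => ?_⟩
    · rw [mvG_p, mvp_hom (l := 1) (isHomogeneous_X K v)]; simp
    · exact (mul_eq_zero.mp ha).resolve_left (X_ne_zero v)
  · intro J hJ hX
    by_cases hu : ∃ a ∈ J, mvp K m 0 a ≠ 0
    · obtain ⟨a, ha, h0⟩ := hu
      have := Ideal.eq_top_of_isUnit_mem J (hJ 0 a ha) (mvp_unit a h0)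
      rw [this]
      exact ⟨0, RQ.top 0⟩
    · push Not at hu
      have e : J = Jp (fun v : Fin m => (X v : MvPolynomial (Fin m) K)) m := by
        apply le_antisymm
        · intro a ha
          rw [mem_JpX]
          intro c hc
          by_contra hcon
          push Not at hcon
          have hc0 : c = 0 := by ext v; exact hcon v v.2
          have h0 := hu a ha
          rw [mvp_nonneg le_rfl] at h0
          rw [hc0, mem_support_iff] at hc
          apply hc
          have := congrArg (coeff 0) h0
          simpa [coeff_homogeneousComponent] using this
        · rw [Jp_full, Ideal.span_le]
          exact hX
      rw [e]
      refine ⟨_, (regseq_reg (fun v : Fin m => (X v : MvPolynomial (Fin m) K)) (fun _ => 1) ?_ ?_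
        X_reg).1⟩
      · intro v
        rw [mvG_p, mvp_hom (l := 1) (isHomogeneous_X K v)]; simp
      · intro _; exact le_rfl

section Conv
variable (I : Ideal (MvPolynomial (Fin m) K)) (hI : GStab (mvG K m).self I)
  
theorem quot_iff (j : ℤ) (y : MvPolynomial (Fin m) K ⧸ I) :
    y ∈ quotPieces (homogeneousSubmodule (Fin m) K) I j ↔ ((mvG K m).self.quot I hI).p j y = y := by
  constructor
  · rintro ⟨x, hx, rfl⟩
    change ((mvG K m).self.quot I hI).p j (Submodule.mkQ I x) = Submodule.mkQ I x
    rw [GM.quot_p]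
    change Submodule.mkQ I (mvp K m j x) = _
    rw [(mvp_eq_iff x j).mpr hx]
  · intro h
    obtain ⟨x, rfl⟩ := Submodule.mkQ_surjective I y
    rw [GM.quot_p] at h
    refine ⟨mvp K m j x, ?_, h⟩
    rw [SetLike.mem_coe, ← mvp_eq_iff]
    have := (mvG K m).idem j j x
    rwa [if_pos rfl] at this

theorem free_iff {ι : Type} (σ : ι → ℤ) (j : ℤ) (x : ι →₀ MvPolynomial (Fin m) K) :
    (∀ k, x k ∈ zg (homogeneousSubmodule (Fin m) K) (j - σ k)) ↔ ((mvG K m).free σ).p j x = x := by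
  constructor
  · intro h
    ext1 k
    rw [GRing.free_p]
    exact (mvp_eq_iff _ _).mpr (h k)
  · intro h k
    rw [← mvp_eq_iff]
    have := congrArg (fun y => y k) h
    simp only [GRing.free_p] at this
    exact this

theorem single_hom {ι : Type} (σ : ι → ℤ) (k : ι) :
    ((mvG K m).free σ).p (σ k) (Finsupp.single k 1) = Finsupp.single k 1 := by
  rw [GRing.free_p_single, sub_self, (mvG K m).one]

abbrev Res (I : Ideal (MvPolynomial (Fin m) K)) := MinGradedFreeRes K (MvPolynomial (Fin m) K)
        (zg (MvPolynomial.homogeneousSubmodule (Fin m) K))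
        (irrel (MvPolynomial.homogeneousSubmodule (Fin m) K))
        (MvPolynomial (Fin m) K ⧸ I)
        (quotPieces (MvPolynomial.homogeneousSubmodule (Fin m) K) I)

variable {I}

theorem Res.hd (R : Res I) (i : ℕ) :
    GHom ((mvG K m).free (R.σ (i + 1))) ((mvG K m).free (R.σ i)) (R.d i) := by
  refine GHom.of_gens _ _ _ fun k => ?_
  rw [← free_iff]
  exact R.graded_d i _ _ ((free_iff _ _ _).mpr (single_hom _ k))

theorem Res.hε (R : Res I) :
    GHom ((mvG K m).free (R.σ 0)) ((mvG K m).self.quot I hI) R.ε := by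
  refine GHom.of_gens _ _ _ fun k => ?_
  rw [← quot_iff]
  exact R.graded_ε _ _ ((free_iff _ _ _).mpr (single_hom _ k))

theorem Res.le_iff (hI : GStab (mvG K m).self I) (R : Res I) (t : ℤ) :
    RQ (mvG K m) t I ↔ ∀ i k, R.σ i k - i ≤ t := by
  constructor
  · rintro ⟨hI, h⟩ i k
    exact regLe_res (fun a ha => (irrel_iff a).mpr ha) one_notMem_irrel (Res.hd R) (Res.hε hI R)
      R.exact_d R.exact_ε R.surj
      (fun i x k => (mem_smul_top_iff _ _).mp (R.minimal i x) k) h i k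
  · intro h
    exact ⟨hI, res_regLe (Res.hd R) (Res.hε hI R) R.exact_d R.exact_ε R.surj h⟩

theorem Res.exists (hI : GStab (mvG K m).self I) (hIm : I ≤ irrel (homogeneousSubmodule (Fin m) K)) :
    ∃ R : Res I, Nonempty (R.ι 0) := by
  obtain ⟨ι, σ, d, ε, hfin, hne, hd, hε, exd, exε, hs, hmin⟩ :=
    exists_res (G := mvG K m) (fun a ha => (irrel_iff a).mpr ha) mvp_unit I hI hIm
  refine ⟨⟨ι, hfin, σ, d, ε, exd, exε, hs, ?_, ?_, ?_⟩, hne⟩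
  · intro i j x hx
    rw [free_iff] at hx ⊢
    rw [hd, hx]
  · intro j x hx
    rw [free_iff] at hx
    rw [quot_iff I hI, hε, hx]
  · intro i x
    rw [mem_smul_top_iff]
    exact hmin i x

end Conv
end Csec

section Fsec

theorem idealHeight_top {A : Type} [CommRing A] : idealHeight (⊤ : Ideal A) = ⊤ := by
  unfold idealHeight
  refine iInf_eq_top.mpr fun p => iInf_eq_top.mpr fun h => ?_
  exact absurd (top_le_iff.mp h) p.2.ne_top

theorem IsACI.ne_top {A : Type} [CommRing A] {I : Ideal A} (h : IsACI I) : I ≠ ⊤ := by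
  rintro rfl
  have := h.1
  rw [idealHeight_top, top_add] at this
  exact ENat.coe_ne_top _ this

theorem Jp_castSucc {A : Type} [CommRing A] {n : ℕ} (f : Fin (n + 1) → A) (i : ℕ) (hi : i ≤ n) :
    Jp (f ∘ Fin.castSucc) i = Jp f i := by
  unfold Jp
  congr 1
  ext x
  constructor
  · rintro ⟨j, hj, rfl⟩
    exact ⟨Fin.castSucc j, hj, rfl⟩
  · rintro ⟨j, hj, rfl⟩
    have hj' : (j : ℕ) < i := hj
    exact ⟨⟨j, by omega⟩, hj', rfl⟩

theorem IsDSequence.jp {A : Type} [CommRing A] {N : ℕ} {f : Fin N → A} (h : IsDSequence f)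
    (i : Fin N) (a : A) (h1 : a * f i ∈ Jp f i) (h2 : a ∈ Jp f N) : a ∈ Jp f i := by
  have h3 := h i
  rw [← Jp_full] at h3
  change a ∈ Ideal.span (f '' {j | j < i})
  rw [← h3]
  refine ⟨?_, h2⟩
  rw [SetLike.mem_coe, Submodule.mem_colon]
  intro x hx
  obtain ⟨b, rfl⟩ := Ideal.mem_span_singleton'.mp hx
  have : a • (b * f i) = b * (a * f i) := by rw [smul_eq_mul]; ring
  rw [this]
  exact Ideal.mul_mem_left _ _ h1

theorem reg_eq_of {K : Type} [Field K] {m : ℕ} {I : Ideal (MvPolynomial (Fin m) K)} (R : Res I)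
    (t : ℤ) (h : RQ (mvG K m) t I) (h' : ¬ RQ (mvG K m) (t - 1) I) : R.reg = t := by
  have hle := (Res.le_iff h.1 R t).mp h
  rw [Res.le_iff h.1 R] at h'
  push Not at h'
  obtain ⟨i, k, hik⟩ := h'
  refine IsGreatest.csSup_eq ⟨⟨i, k, ?_⟩, ?_⟩
  · have := hle i k
    omega
  · rintro _ ⟨i, k, rfl⟩
    exact hle i k

end Fsec

/-- Asymptotic linearity of regularity of powers of an almost complete intersection:
under the hypotheses of Theorem 2.4 with `d_1 ≤ … ≤ d_n` (indexed here by `Fin (n+1)`),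
for every `s ≥ 2` (hence for `s ≫ 0`)
`reg (A/I^s) = d_n · s + ((∑ d_l) - n - 2 d_n)`, a linear function of `s` with leading
coefficient `d_n`. -/
theorem reg_powers_aci_linear (K : Type) [Field K] [Infinite K] (m n : ℕ)
    (d : Fin (n + 1) → ℕ) (f : Fin (n + 1) → MvPolynomial (Fin m) K)
    (I : Ideal (MvPolynomial (Fin m) K)) (hACI : IsACI I)
    (hhom : ∀ l, f l ∈ MvPolynomial.homogeneousSubmodule (Fin m) K (d l))
    (hI : I = Ideal.span (Set.range f))
    (hd : IsDSequence f) (hrs : IsRegSeq (f ∘ Fin.castSucc))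
    (hregI : ∀ RI : MinGradedFreeRes K (MvPolynomial (Fin m) K)
        (zg (MvPolynomial.homogeneousSubmodule (Fin m) K))
        (irrel (MvPolynomial.homogeneousSubmodule (Fin m) K))
        (MvPolynomial (Fin m) K ⧸ I)
        (quotPieces (MvPolynomial.homogeneousSubmodule (Fin m) K) I),
      RI.reg < (∑ l : Fin n, (d (Fin.castSucc l) : ℤ)) - (n : ℤ))
    (hmono : Monotone d) :
    ∀ s : ℕ, 2 ≤ s →
    ∀ R : MinGradedFreeRes K (MvPolynomial (Fin m) K)
        (zg (MvPolynomial.homogeneousSubmodule (Fin m) K))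
        (irrel (MvPolynomial.homogeneousSubmodule (Fin m) K))
        (MvPolynomial (Fin m) K ⧸ (I ^ s))
        (quotPieces (MvPolynomial.homogeneousSubmodule (Fin m) K) (I ^ s)),
      R.reg = (d (Fin.last n) : ℤ) * (s : ℤ)
        + ((∑ l, (d l : ℤ)) - ((n : ℤ) + 1) - 2 * (d (Fin.last n) : ℤ)) := by
  classical
  have hf : ∀ l, (mvG K m).p (d l : ℤ) (f l) = f l := by
    intro l
    rw [mvG_p, mvp_hom (hhom l), if_pos rfl]
  have hIJ : I = Jp f (n + 1) := by rw [hI, Jp_full]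
  have hItop : I ≠ ⊤ := hACI.ne_top
  have hIst : GStab (mvG K m).self I := by
    rw [hIJ]; exact Jp_stab f (fun l => (d l : ℤ)) hf _
  have hIm : I ≤ irrel (MvPolynomial.homogeneousSubmodule (Fin m) K) := by
    intro a ha
    rw [irrel_iff]
    by_contra h
    exact hItop (Ideal.eq_top_of_isUnit_mem I (hIst 0 a ha) (mvp_unit a h))
  obtain ⟨hrs1, hrs2⟩ := hrs
  have hd1 : ∀ l : Fin n, 1 ≤ d (Fin.castSucc l) := by
    intro l
    by_contra h
    have h0 : d (Fin.castSucc l) = 0 := by omega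
    have h1 := hhom (Fin.castSucc l)
    rw [h0] at h1
    apply hrs2
    by_cases hz : f (Fin.castSucc l) = 0
    · rw [Ideal.eq_top_iff_one]
      have := hrs1 l 1 (by
        rw [Function.comp_apply, hz, mul_zero]; exact zero_mem _)
      exact Ideal.span_mono (Set.image_subset_range _ _) this
    · exact Ideal.eq_top_of_isUnit_mem _ (Ideal.subset_span ⟨l, rfl⟩) (zero_deg_unit h1 hz)
  have hJJ := regseq_reg (G := mvG K m) (f ∘ Fin.castSucc) (fun l => (d (Fin.castSucc l) : ℤ))
    (fun l => hf _) (fun l => by exact_mod_cast hd1 l) hrs1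
  rw [Jp_castSucc f n le_rfl] at hJJ
  set r : ℤ := ∑ l : Fin n, ((d (Fin.castSucc l) : ℤ) - 1) with hr
  have hr' : r = (∑ l : Fin n, (d (Fin.castSucc l) : ℤ)) - n := by
    rw [hr, Finset.sum_sub_distrib]; simp
  have hIr : RQ (mvG K m) (r - 1) I := by
    obtain ⟨RI, _⟩ := Res.exists hIst hIm
    have hlt := hregI RI
    rw [← hr'] at hlt
    rw [Res.le_iff hIst RI]
    obtain ⟨t, ht⟩ := mv_bound I hIst
    rw [Res.le_iff hIst RI] at ht
    intro i k
    have : RI.σ i k - i ≤ RI.reg := by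
      refine le_csSup ⟨t, ?_⟩ ⟨i, k, rfl⟩
      rintro _ ⟨i, k, rfl⟩
      exact ht i k
    omega
  have hdl : 1 ≤ d (Fin.last n) := by
    by_contra h
    have h0 : d (Fin.last n) = 0 := by omega
    have h1 := hhom (Fin.last n)
    rw [h0] at h1
    by_cases hz : f (Fin.last n) = 0
    · apply hJJ.2
      have e := Jp_succ f (Fin.last n)
      rw [hz] at e
      simp only [Fin.val_last, Submodule.span_zero_singleton, Ideal.span_singleton_zero,
        sup_bot_eq] at e
      rw [← e, ← hIJ]
      exact hIr
    · apply hItop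
      rw [hI]
      exact Ideal.eq_top_of_isUnit_mem _ (Ideal.subset_span ⟨_, rfl⟩) (zero_deg_unit h1 hz)
  intro s hs R
  obtain ⟨u, rfl⟩ : ∃ u, s = u + 1 := ⟨s - 1, by omega⟩
  have hmain := main_reg (G := mvG K m) f (fun l => (d l : ℤ)) hf (by exact_mod_cast hdl)
    (fun l => by exact_mod_cast hmono (Fin.le_last l)) hd.jp (by
      intro i hi a ha
      have h2 := hrs1 ⟨i, hi⟩ a
      have e := Jp_castSucc f i hi.le
      change a * f i ∈ Jp (f ∘ Fin.castSucc) i → a ∈ Jp (f ∘ Fin.castSucc) i at h2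
      rw [e] at h2
      exact h2 ha) r hJJ.1 hJJ.2 (hIJ ▸ hIr) u (by omega)
  rw [← hIJ] at hmain
  rw [reg_eq_of R _ hmain.1 hmain.2, hr', Fin.sum_univ_castSucc]
  push_cast
  ring
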